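/- arXiv:2206.01342 — 8 statements merged into one kernel-verified Lean document; each statement's English description precedes it below -/
import Mathlib

section
/- Let u_1, …, u_M be an orthonormal family in ℝ^d, and let y be a random variable on a finite probability space taking values in {1, …, M} with P[y = m'] = p_{m'}. Define the random vector X := u_y. Fix an index m and define the gated vector g := X · 1{⟨u_m, X⟩ > 0}. Then the covariance matrix of g equals p_m (1 − p_m) · u_m u_mᵀ. Consequently, if 0 < p_m < 1, then u_m is an eigenvector of this covariance matrix attaining its (distinct) maximal eigenvalue p_m(1 − p_m). -/
open Matrix Finset
open scoped Classical

/-- Expectation of a random vector on a finite probability space with weights `P`. -/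
noncomputable def expecVec {Ω ι : Type*} [Fintype Ω] [Fintype ι] (P : Ω → ℝ)
    (h : Ω → ι → ℝ) : ι → ℝ :=
  ∑ ω, P ω • h ω

/-- Covariance matrix `E[h hᵀ] − E[h] E[h]ᵀ` of a random vector on a finite probability
space with weights `P`. -/
noncomputable def covMat {Ω ι : Type*} [Fintype Ω] [Fintype ι] (P : Ω → ℝ)
    (h : Ω → ι → ℝ) : Matrix ι ι ℝ :=
  (∑ ω, P ω • vecMulVec (h ω) (h ω)) - vecMulVec (expecVec P h) (expecVec P h)

/-! By orthonormality the gate `⟨u_m, X⟩ > 0` is open exactly when `y = m`, so the gated vector is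
the constant `u_m` on an event of probability `p_m` and zero elsewhere. Its first and second moments
are `p_m u_m` and `p_m u_m u_mᵀ`, whence the covariance has rank at most one, and the spectrum of a
rank-one matrix `a bᵀ` is read off by pairing an eigenvector with `b`. -/

section RankOne

variable {ι : Type*} [Fintype ι]

theorem vecMulVec_mulVec_eq_smul {R κ : Type*} [CommSemiring R] (a : κ → R) (b v : ι → R) :
    vecMulVec a b *ᵥ v = (b ⬝ᵥ v) • a := by
  rw [vecMulVec_mulVec, op_smul_eq_smul]

theorem eq_zero_or_eq_dotProduct_of_vecMulVec_mulVec_eq_smul {R : Type*} [CommRing R]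
    [NoZeroDivisors R] {a b v : ι → R} {μ : R} (hv : v ≠ 0) (h : vecMulVec a b *ᵥ v = μ • v) :
    μ = 0 ∨ μ = b ⬝ᵥ a := by
  rw [vecMulVec_mulVec_eq_smul] at h
  by_cases hbv : b ⬝ᵥ v = 0
  · left
    rw [hbv, zero_smul] at h
    exact (smul_eq_zero.mp h.symm).resolve_right hv
  · right
    have hpair : (b ⬝ᵥ v) * (b ⬝ᵥ a) = μ * (b ⬝ᵥ v) := by
      simpa only [dotProduct_smul, smul_eq_mul] using congrArg (b ⬝ᵥ ·) h
    exact mul_right_cancel₀ hbv (by rw [← hpair, mul_comm])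

theorem exists_eq_smul_of_vecMulVec_mulVec_eq_smul {K : Type*} [Field K] {a b v : ι → K} {μ : K}
    (hμ : μ ≠ 0) (h : vecMulVec a b *ᵥ v = μ • v) : ∃ t : K, v = t • a := by
  rw [vecMulVec_mulVec_eq_smul] at h
  exact ⟨μ⁻¹ * (b ⬝ᵥ v), by rw [mul_smul, h, inv_smul_smul₀ hμ]⟩

end RankOne

section TwoPoint

theorem sum_smul_ite_zero {Ω R E : Type*} [Fintype Ω] [Semiring R] [AddCommMonoid E] [Module R E]
    (P : Ω → R) (s : Ω → Prop) [DecidablePred s] (x : E) :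
    ∑ ω, P ω • (if s ω then x else 0) = (∑ ω, if s ω then P ω else 0) • x := by
  simp only [sum_smul, smul_ite, ite_smul, smul_zero, zero_smul]

theorem covMat_ite_zero {Ω ι : Type*} [Fintype Ω] [Fintype ι] (P : Ω → ℝ) (s : Ω → Prop)
    [DecidablePred s] {q : ℝ} (hq : q = ∑ ω, if s ω then P ω else 0) (a : ι → ℝ) :
    covMat P (fun ω => if s ω then a else 0) = (q * (1 - q)) • vecMulVec a a := by
  have hmean : expecVec P (fun ω => if s ω then a else 0) = q • a := by
    rw [expecVec, sum_smul_ite_zero, hq]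
  have houter (ω : Ω) : vecMulVec (if s ω then a else 0) (if s ω then a else 0) =
      if s ω then vecMulVec a a else 0 := by
    split_ifs
    · rfl
    · exact vecMulVec_zero 0
  have hsecond : ∑ ω, P ω • vecMulVec (if s ω then a else 0) (if s ω then a else 0) =
      q • vecMulVec a a := by
    simp only [houter, sum_smul_ite_zero, hq]
  rw [covMat, hmean, hsecond, smul_vecMulVec, vecMulVec_smul]
  module

end TwoPoint

section ReluGate

variable {Ω ι κ : Type*} [Fintype ι] [DecidableEq κ]

/-- The ReLU gating `X · 1{⟨w, X⟩ > 0}` of a random vector `X` in direction `w`; its covariance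
matrix is the `A(w)` of the latent categorical model. -/
noncomputable def reluGate (w : ι → ℝ) (X : Ω → ι → ℝ) : Ω → ι → ℝ :=
  fun ω => if 0 < w ⬝ᵥ X ω then X ω else 0

theorem reluGate_eq_ite (u : κ → ι → ℝ) (y : Ω → κ) {m : κ}
    (hobtuse : ∀ m' ≠ m, u m ⬝ᵥ u m' ≤ 0) :
    reluGate (u m) (fun ω => u (y ω)) = fun ω => if y ω = m then u m else 0 := by
  funext ω
  by_cases hy : y ω = m
  · by_cases hm : u m = 0
    · simp [reluGate, hy, hm]
    · have hpos : 0 < u m ⬝ᵥ u m := dotProduct_self_star_pos_iff.mpr hm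
      simp only [reluGate, hy, hpos, if_true]
  · simp only [reluGate, hy, (hobtuse (y ω) hy).not_gt, if_false]

theorem covMat_reluGate [Fintype Ω] (u : κ → ι → ℝ) (P : Ω → ℝ) (y : Ω → κ) {m : κ}
    (hobtuse : ∀ m' ≠ m, u m ⬝ᵥ u m' ≤ 0) {q : ℝ} (hq : q = ∑ ω, if y ω = m then P ω else 0) :
    covMat P (reluGate (u m) fun ω => u (y ω)) = (q * (1 - q)) • vecMulVec (u m) (u m) := by
  rw [reluGate_eq_ite u y hobtuse, covMat_ite_zero P (y · = m) hq]

end ReluGate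

theorem stmt2_general {Ω ι κ : Type*} [Fintype Ω] [Fintype ι] [DecidableEq κ]
    (u : κ → ι → ℝ) (P : Ω → ℝ) (y : Ω → κ) (m : κ) (hm : u m ≠ 0)
    (hobtuse : ∀ m' ≠ m, u m ⬝ᵥ u m' ≤ 0)
    (q : ℝ) (hq : q = ∑ ω, if y ω = m then P ω else 0) :
    let C := covMat P (reluGate (u m) fun ω => u (y ω))
    C = (q * (1 - q)) • vecMulVec (u m) (u m) ∧
      (0 < q → q < 1 →
        C *ᵥ u m = (q * (1 - q) * (u m ⬝ᵥ u m)) • u m ∧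
        (∀ (μ : ℝ) (v : ι → ℝ), v ≠ 0 → C *ᵥ v = μ • v → μ ≤ q * (1 - q) * (u m ⬝ᵥ u m)) ∧
        (∀ v : ι → ℝ, C *ᵥ v = (q * (1 - q) * (u m ⬝ᵥ u m)) • v → ∃ t : ℝ, v = t • u m)) := by
  intro C
  have hC : C = (q * (1 - q)) • vecMulVec (u m) (u m) := covMat_reluGate u P y hobtuse hq
  refine ⟨hC, fun h0 h1 => ?_⟩
  have hpos : 0 < q * (1 - q) * (u m ⬝ᵥ u m) :=
    mul_pos (mul_pos h0 (sub_pos.mpr h1)) (dotProduct_self_star_pos_iff.mpr hm)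
  rw [hC, ← vecMulVec_smul]
  refine ⟨?_, fun μ v hv h => ?_, fun v h => ?_⟩
  · rw [vecMulVec_mulVec_eq_smul, smul_dotProduct, smul_eq_mul]
  · rcases eq_zero_or_eq_dotProduct_of_vecMulVec_mulVec_eq_smul hv h with rfl | rfl
    · exact hpos.le
    · rw [smul_dotProduct, smul_eq_mul]
  · exact exists_eq_smul_of_vecMulVec_mulVec_eq_smul hpos.ne' h

/-- latent categorical model. For `X = u_y` with `y` categorical and
`g = X · 1{⟨u_m, X⟩ > 0}`, the covariance matrix of `g` equals `p_m (1 − p_m) u_m u_mᵀ`;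
if `0 < p_m < 1`, then `u_m` is an eigenvector attaining the distinct maximal eigenvalue
`p_m (1 − p_m)`. -/
theorem stmt2 {Ω : Type*} [Fintype Ω] {d M : ℕ}
    (u : Fin M → Fin d → ℝ)
    (hu : ∀ m m', u m ⬝ᵥ u m' = if m = m' then (1 : ℝ) else 0)
    (P : Ω → ℝ) (hP : ∀ ω, 0 ≤ P ω) (hPsum : ∑ ω : Ω, P ω = 1)
    (y : Ω → Fin M) (p : Fin M → ℝ)
    (hp : ∀ m', p m' = ∑ ω, if y ω = m' then P ω else 0)
    (m : Fin M) :
    let X : Ω → Fin d → ℝ := fun ω => u (y ω)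
    let g : Ω → Fin d → ℝ := fun ω => if 0 < u m ⬝ᵥ X ω then X ω else 0
    covMat P g = (p m * (1 - p m)) • vecMulVec (u m) (u m) ∧
      (0 < p m → p m < 1 →
        (covMat P g).mulVec (u m) = (p m * (1 - p m)) • u m ∧
        (∀ (μ : ℝ) (v : Fin d → ℝ), v ≠ 0 → (covMat P g).mulVec v = μ • v →
          μ ≤ p m * (1 - p m)) ∧
        (∀ v : Fin d → ℝ, (covMat P g).mulVec v = (p m * (1 - p m)) • v →
          ∃ t : ℝ, v = t • u m)) := by
  have hunit : u m ⬝ᵥ u m = 1 := by rw [hu, if_pos rfl]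
  have hm : u m ≠ 0 := fun h => by simp [h] at hunit
  have hobtuse : ∀ m' ≠ m, u m ⬝ᵥ u m' ≤ 0 := fun m' h => by rw [hu, if_neg h.symm]
  simpa only [hunit, mul_one] using! stmt2_general u P y m hm hobtuse (p m) (hp m)
end

section
/- Let u_1, …, u_d be an orthonormal basis of ℝ^d, and let y_1, …, y_d be independent random variables on a finite probability space where y_{m'} takes the value √((1 − q_{m'})/q_{m'}) with probability q_{m'} and the value −√(q_{m'}/(1 − q_{m'})) with probability 1 − q_{m'}, with 0 < q_{m'} < 1 (so E[y_{m'}] = 0 and E[y_{m'}²] = 1). Define X := Σ_{m'} y_{m'} u_{m'}. Fix an index m and define the gated vector g := X · 1{y_m > 0}. Then the covariance matrix of g equals (1 − q_m)² u_m u_mᵀ + q_m (I − u_m u_mᵀ). -/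
open Matrix Finset
open scoped Classical

/-!
Gating multiplies every coefficient `y j` of `X` by the same factor `φ (y m)`, where `φ` is the
indicator of the positive half-line, and a covariance matrix transforms by congruence under linear
maps. So the covariance matrix of the coefficients `φ (y m) * y j` decides everything. It is
diagonal, because for `j ≠ m` independence splits off a factor `E[y j] = 0`. Its entry at `j ≠ m`
is `E[φ (y m)²] E[(y j)²] = q m`, and its entry at `m` is the variance of the positive part of
`y m`, namely `(1 - q m) - q m * (1 - q m) = (1 - q m)²`. Finally, an orthonormal basis satisfies
`∑ j ≠ m, u j (u j)ᵀ = I - u m (u m)ᵀ`.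
-/

/-- Expectation of a real random variable on a finite probability space with weights `P`; neither
nonnegativity nor total mass one is built into the weights. -/
noncomputable def expec {Ω : Type*} [Fintype Ω] (P : Ω → ℝ) (f : Ω → ℝ) : ℝ :=
  ∑ ω, P ω * f ω

/-- Mutual independence of a finite family of random variables on a finite probability space with
weights `P`: the joint mass function is the product of the marginal mass functions. -/
def MutuallyIndep {Ω ι : Type*} [Fintype Ω] [Fintype ι] {α : ι → Type*} (P : Ω → ℝ)
    (y : ∀ i, Ω → α i) : Prop :=
  ∀ v : ∀ i, α i, (∑ ω, if ∀ i, y i ω = v i then P ω else 0) =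
    ∏ i, ∑ ω, if y i ω = v i then P ω else 0

/-- The standardized Bernoulli variable of parameter `q`: the affine image of a Bernoulli variable
with success probability `q` that has mean zero and variance one. Its law is encoded by the two
possible values and the mass of the larger one. -/
structure IsStdBernoulli {Ω : Type*} [Fintype Ω] (P : Ω → ℝ) (q : ℝ) (y : Ω → ℝ) : Prop where
  pos : 0 < q
  lt_one : q < 1
  eq_or_eq : ∀ ω, y ω = √((1 - q) / q) ∨ y ω = -√(q / (1 - q))
  sum_ite_eq : (∑ ω, if y ω = √((1 - q) / q) then P ω else 0) = q

section OuterProducts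

variable {R ι κ : Type*} [Fintype ι] [DecidableEq ι] [CommRing R]

theorem transpose_mul_diagonal_mul (u : ι → κ → R) (D : ι → R) :
    (of u)ᵀ * diagonal D * of u = ∑ i, D i • vecMulVec (u i) (u i) := by
  ext s t
  rw [mul_apply, Matrix.sum_apply]
  refine sum_congr rfl fun i _ => ?_
  rw [mul_diagonal, transpose_apply, of_apply, of_apply, Matrix.smul_apply, vecMulVec_apply,
    smul_eq_mul]
  ring

theorem sum_vecMulVec_self_eq_one {u : ι → ι → R}
    (hu : ∀ i j, u i ⬝ᵥ u j = if i = j then 1 else 0) :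
    ∑ i, vecMulVec (u i) (u i) = 1 := by
  have hrows : of u * (of u)ᵀ = 1 := by
    ext i j
    exact (hu i j).trans one_apply.symm
  have hcols : (of u)ᵀ * of u = 1 := mul_eq_one_comm.1 hrows
  simpa [hcols] using (transpose_mul_diagonal_mul u 1).symm

theorem sum_erase_vecMulVec_self {u : ι → ι → R}
    (hu : ∀ i j, u i ⬝ᵥ u j = if i = j then 1 else 0) (m : ι) :
    ∑ i ∈ univ.erase m, vecMulVec (u i) (u i) = 1 - vecMulVec (u m) (u m) := by
  rw [sum_erase_eq_sub (mem_univ m), sum_vecMulVec_self_eq_one hu]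

end OuterProducts

section Covariance

variable {Ω ι κ : Type*} [Fintype Ω] [Fintype ι] [Fintype κ] (P : Ω → ℝ)

theorem covMat_apply (h : Ω → ι → ℝ) (i j : ι) :
    covMat P h i j = expec P (fun ω => h ω i * h ω j) -
      expec P (fun ω => h ω i) * expec P (fun ω => h ω j) := by
  simp [covMat, expecVec, expec, Matrix.sum_apply, vecMulVec_apply]

theorem expecVec_vecMul (z : Ω → ι → ℝ) (U : Matrix ι κ ℝ) :
    expecVec P (fun ω => z ω ᵥ* U) = expecVec P z ᵥ* U := by
  simp only [expecVec, sum_vecMul, smul_vecMul]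

theorem covMat_vecMul (z : Ω → ι → ℝ) (U : Matrix ι κ ℝ) :
    covMat P (fun ω => z ω ᵥ* U) = Uᵀ * covMat P z * U := by
  have outer (v : ι → ℝ) : vecMulVec (v ᵥ* U) (v ᵥ* U) = Uᵀ * vecMulVec v v * U := by
    rw [mul_vecMulVec, vecMulVec_mul, mulVec_transpose]
  simp only [covMat, expecVec_vecMul, outer, Matrix.mul_sub, Matrix.sub_mul, Matrix.mul_sum,
    Matrix.sum_mul, Matrix.mul_smul, Matrix.smul_mul]

end Covariance

section Independence

variable {Ω ι : Type*} [Fintype Ω] {P : Ω → ℝ}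

theorem expec_const (hP : ∑ ω, P ω = 1) (c : ℝ) : expec P (fun _ => c) = c := by
  rw [expec, ← sum_mul, hP, one_mul]

theorem expec_comp_eq_sum {α : Type*} {y : Ω → α} {s : Finset α} (hs : ∀ ω, y ω ∈ s)
    (f : α → ℝ) :
    expec P (fun ω => f (y ω)) = ∑ x ∈ s, (∑ ω, if y ω = x then P ω else 0) * f x := by
  simp_rw [sum_mul]
  rw [sum_comm]
  simp [expec, ite_mul, hs]

namespace MutuallyIndep

variable [Fintype ι] {α : ι → Type*} {y : ∀ i, Ω → α i}

theorem expec_prod_univ (h : MutuallyIndep P y) (f : ∀ i, α i → ℝ) :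
    expec P (fun ω => ∏ i, f i (y i ω)) = ∏ i, expec P (fun ω => f i (y i ω)) := by
  let S (i : ι) : Finset (α i) := univ.image (y i)
  have hS (i : ι) (ω : Ω) : y i ω ∈ S i := mem_image_of_mem _ (mem_univ ω)
  have hmem (ω : Ω) : (fun i => y i ω) ∈ Fintype.piFinset S :=
    Fintype.mem_piFinset.2 fun i => hS i ω
  calc expec P (fun ω => ∏ i, f i (y i ω))
      = ∑ v ∈ Fintype.piFinset S, (∑ ω, if ∀ i, y i ω = v i then P ω else 0) *
          ∏ i, f i (v i) := by
        simpa only [funext_iff] using expec_comp_eq_sum hmem fun v => ∏ i, f i (v i)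
    _ = ∑ v ∈ Fintype.piFinset S, ∏ i, (∑ ω, if y i ω = v i then P ω else 0) * f i (v i) :=
        sum_congr rfl fun v _ => by rw [h v, prod_mul_distrib]
    _ = ∏ i, ∑ x ∈ S i, (∑ ω, if y i ω = x then P ω else 0) * f i x := by
        rw [prod_univ_sum]
    _ = ∏ i, expec P (fun ω => f i (y i ω)) :=
        prod_congr rfl fun i _ => (expec_comp_eq_sum (hS i) (f i)).symm

theorem expec_prod (hP : ∑ ω, P ω = 1) (h : MutuallyIndep P y) (s : Finset ι)
    (f : ∀ i, α i → ℝ) :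
    expec P (fun ω => ∏ i ∈ s, f i (y i ω)) = ∏ i ∈ s, expec P (fun ω => f i (y i ω)) := by
  have hprod := h.expec_prod_univ fun i x => if i ∈ s then f i x else 1
  have hfactor (i : ι) : expec P (fun ω => if i ∈ s then f i (y i ω) else 1) =
      if i ∈ s then expec P (fun ω => f i (y i ω)) else 1 := by
    split_ifs
    · rfl
    · exact expec_const hP 1
  simpa only [hfactor, prod_ite_mem, univ_inter] using hprod

theorem expec_mul (hP : ∑ ω, P ω = 1) (h : MutuallyIndep P y) {i j : ι} (hij : i ≠ j)
    (f : α i → ℝ) (g : α j → ℝ) :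
    expec P (fun ω => f (y i ω) * g (y j ω)) =
      expec P (fun ω => f (y i ω)) * expec P (fun ω => g (y j ω)) := by
  let F : ∀ k, α k → ℝ := Function.update (Function.update (fun _ _ => 1) i f) j g
  simpa [F, prod_pair hij, hij] using h.expec_prod hP {i, j} F

theorem expec_mul_mul (hP : ∑ ω, P ω = 1) (h : MutuallyIndep P y) {i j k : ι} (hij : i ≠ j)
    (hik : i ≠ k) (hjk : j ≠ k) (f : α i → ℝ) (g : α j → ℝ) (e : α k → ℝ) :
    expec P (fun ω => f (y i ω) * (g (y j ω) * e (y k ω))) =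
      expec P (fun ω => f (y i ω)) *
        (expec P (fun ω => g (y j ω)) * expec P (fun ω => e (y k ω))) := by
  let F : ∀ l, α l → ℝ :=
    Function.update (Function.update (Function.update (fun _ _ => 1) i f) j g) k e
  simpa [F, hij, hik, hjk] using h.expec_prod hP {i, j, k} F

end MutuallyIndep

end Independence

section Gating

variable {Ω ι κ : Type*} [Fintype Ω] [Fintype ι] [Fintype κ] {P : Ω → ℝ} {y : ι → Ω → ℝ} {m : ι}

namespace MutuallyIndep

theorem expec_gate_mul_eq_zero (hP : ∑ ω, P ω = 1) (h : MutuallyIndep P y) (φ : ℝ → ℝ) {j : ι}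
    (hj : j ≠ m) (hmean : expec P (y j) = 0) :
    expec P (fun ω => φ (y m ω) * y j ω) = 0 :=
  (h.expec_mul hP hj.symm φ id).trans (mul_eq_zero_of_right _ hmean)

theorem expec_gate_mul_mul_eq_zero (hP : ∑ ω, P ω = 1) (h : MutuallyIndep P y) (φ : ℝ → ℝ)
    (hmean : ∀ j ≠ m, expec P (y j) = 0) {i j : ι} (hij : i ≠ j) :
    expec P (fun ω => φ (y m ω) * (y i ω * y j ω)) = 0 := by
  wlog hj : j ≠ m generalizing i j
  · have hi : i ≠ m := fun hi => hij (hi.trans (not_not.1 hj).symm)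
    simpa only [mul_comm (y i _)] using this hij.symm hi
  obtain rfl | hi := eq_or_ne i m
  · simpa only [mul_assoc] using
      h.expec_gate_mul_eq_zero hP (fun x => φ x * x) hj (hmean j hj)
  · have hfactor := h.expec_mul_mul hP hi.symm hj.symm hij φ id id
    exact hfactor.trans (mul_eq_zero_of_right _ (mul_eq_zero_of_right _ (hmean j hj)))

theorem covMat_gate [DecidableEq ι] (hP : ∑ ω, P ω = 1) (h : MutuallyIndep P y) (φ : ℝ → ℝ)
    (hmean : ∀ j ≠ m, expec P (y j) = 0) (hvar : ∀ j ≠ m, expec P (fun ω => y j ω ^ 2) = 1) :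
    covMat P (fun ω j => φ (y m ω) * y j ω) = diagonal fun j =>
      if j = m then
        expec P (fun ω => (φ (y m ω) * y m ω) ^ 2) - expec P (fun ω => φ (y m ω) * y m ω) ^ 2
      else expec P (fun ω => φ (y m ω) ^ 2) := by
  have hgate {j : ι} (hj : j ≠ m) : expec P (fun ω => φ (y m ω) * y j ω) = 0 :=
    h.expec_gate_mul_eq_zero hP φ hj (hmean j hj)
  ext i j
  rw [covMat_apply]
  obtain rfl | hij := eq_or_ne i j
  · rw [diagonal_apply_eq]
    obtain rfl | hi := eq_or_ne i m
    · simp only [if_true, sq]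
    · have hsq := h.expec_mul hP hi.symm (fun x => φ x ^ 2) (fun x => x ^ 2)
      simpa [hi, hgate hi, hvar i hi, ← sq, mul_pow] using hsq
  · have hcross := h.expec_gate_mul_mul_eq_zero hP (fun x => φ x ^ 2) hmean hij
    have hmeans : expec P (fun ω => φ (y m ω) * y i ω) *
        expec P (fun ω => φ (y m ω) * y j ω) = 0 := by
      obtain rfl | hi := eq_or_ne i m
      · exact mul_eq_zero_of_right _ (hgate hij.symm)
      · exact mul_eq_zero_of_left (hgate hi) _
    rw [diagonal_apply_ne _ hij, hmeans, sub_zero, ← hcross]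
    congr! 2
    ring

theorem covMat_gate_smul_sum [DecidableEq ι] (hP : ∑ ω, P ω = 1) (h : MutuallyIndep P y)
    (φ : ℝ → ℝ) (hmean : ∀ j ≠ m, expec P (y j) = 0)
    (hvar : ∀ j ≠ m, expec P (fun ω => y j ω ^ 2) = 1) (u : ι → κ → ℝ) :
    covMat P (fun ω => φ (y m ω) • ∑ j, y j ω • u j) =
      (expec P (fun ω => (φ (y m ω) * y m ω) ^ 2) -
        expec P (fun ω => φ (y m ω) * y m ω) ^ 2) • vecMulVec (u m) (u m) +
      expec P (fun ω => φ (y m ω) ^ 2) • ∑ j ∈ univ.erase m, vecMulVec (u j) (u j) := by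
  have hvec : (fun ω => φ (y m ω) • ∑ j, y j ω • u j) =
      fun ω => (fun j => φ (y m ω) * y j ω) ᵥ* of u := by
    ext ω s
    simp [vecMul_apply_eq_sum, mul_sum, mul_assoc]
  rw [hvec, covMat_vecMul, h.covMat_gate hP φ hmean hvar, transpose_mul_diagonal_mul,
    ← add_sum_erase _ _ (mem_univ m), if_pos rfl, smul_sum]
  congr 1
  exact sum_congr rfl fun j hj => by rw [if_neg (ne_of_mem_erase hj)]

end MutuallyIndep

end Gating

theorem mul_sqrt_div_sq {p q : ℝ} (hp : 0 ≤ p) (hq : 0 < q) : q * √(p / q) ^ 2 = p := by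
  rw [Real.sq_sqrt (div_nonneg hp hq.le), mul_div_cancel₀ _ hq.ne']

theorem mul_sqrt_div_eq_sqrt_mul (p : ℝ) {q : ℝ} (hq : 0 ≤ q) : q * √(p / q) = √(p * q) := by
  rw [Real.sqrt_div' p hq, Real.sqrt_mul' p hq, mul_div_left_comm, Real.div_sqrt]

namespace IsStdBernoulli

variable {Ω : Type*} [Fintype Ω] {P : Ω → ℝ} {q : ℝ} {y : Ω → ℝ}

theorem expec_comp (hP : ∑ ω, P ω = 1) (h : IsStdBernoulli P q y) (f : ℝ → ℝ) :
    expec P (fun ω => f (y ω)) = q * f √((1 - q) / q) + (1 - q) * f (-√(q / (1 - q))) := by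
  have hsplit (ω : Ω) : P ω * f (y ω) =
      (if y ω = √((1 - q) / q) then P ω else 0) * f √((1 - q) / q) +
        (P ω - if y ω = √((1 - q) / q) then P ω else 0) * f (-√(q / (1 - q))) := by
    split_ifs with ha
    · rw [ha, sub_self, zero_mul, add_zero]
    · rw [(h.eq_or_eq ω).resolve_left ha, sub_zero, zero_mul, zero_add]
  simp_rw [expec, hsplit, sum_add_distrib, ← sum_mul, sum_sub_distrib, hP]
  rw [h.sum_ite_eq]

theorem expec_eq_zero (hP : ∑ ω, P ω = 1) (h : IsStdBernoulli P q y) : expec P y = 0 := by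
  have h1q : 0 < 1 - q := sub_pos.2 h.lt_one
  rw [h.expec_comp hP fun x => x, mul_neg, mul_sqrt_div_eq_sqrt_mul _ h.pos.le,
    mul_sqrt_div_eq_sqrt_mul _ h1q.le, mul_comm, add_neg_cancel]

theorem expec_sq (hP : ∑ ω, P ω = 1) (h : IsStdBernoulli P q y) :
    expec P (fun ω => y ω ^ 2) = 1 := by
  have h1q : 0 < 1 - q := sub_pos.2 h.lt_one
  rw [h.expec_comp hP fun x => x ^ 2, neg_sq, mul_sqrt_div_sq h1q.le h.pos,
    mul_sqrt_div_sq h.pos.le h1q, sub_add_cancel]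

theorem expec_ite_pos (hP : ∑ ω, P ω = 1) (h : IsStdBernoulli P q y) (f : ℝ → ℝ) :
    expec P (fun ω => if 0 < y ω then f (y ω) else 0) = q * f √((1 - q) / q) := by
  have hpos : 0 < √((1 - q) / q) := Real.sqrt_pos.2 (div_pos (sub_pos.2 h.lt_one) h.pos)
  have hnonpos : -√(q / (1 - q)) ≤ 0 := neg_nonpos.2 (Real.sqrt_nonneg _)
  rw [h.expec_comp hP fun x => if 0 < x then f x else 0, if_pos hpos, if_neg hnonpos.not_gt,
    mul_zero, add_zero]

theorem variance_gate (hP : ∑ ω, P ω = 1) (h : IsStdBernoulli P q y) :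
    expec P (fun ω => if 0 < y ω then y ω ^ 2 else 0) -
      expec P (fun ω => if 0 < y ω then y ω else 0) ^ 2 = (1 - q) ^ 2 := by
  have hsq : q * √((1 - q) / q) ^ 2 = 1 - q := mul_sqrt_div_sq (sub_pos.2 h.lt_one).le h.pos
  rw [h.expec_ite_pos hP fun x => x ^ 2, h.expec_ite_pos hP fun x => x]
  linear_combination (1 - q) * hsq

end IsStdBernoulli

theorem stmt3_general {Ω ι κ : Type*} [Fintype Ω] [Fintype ι] [DecidableEq ι] [Fintype κ]
    (u : ι → κ → ℝ) {P : Ω → ℝ} (hP : ∑ ω, P ω = 1) {y : ι → Ω → ℝ} (h : MutuallyIndep P y)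
    {m : ι} {q : ℝ} (hm : IsStdBernoulli P q (y m)) (hmean : ∀ j ≠ m, expec P (y j) = 0)
    (hvar : ∀ j ≠ m, expec P (fun ω => y j ω ^ 2) = 1) :
    covMat P (fun ω => if 0 < y m ω then ∑ j, y j ω • u j else 0) =
      (1 - q) ^ 2 • vecMulVec (u m) (u m) +
        q • ∑ j ∈ univ.erase m, vecMulVec (u j) (u j) := by
  have hprob : expec P (fun ω => if 0 < y m ω then 1 else 0) = q := by
    simpa only [mul_one] using hm.expec_ite_pos hP fun _ => 1
  have hcov := h.covMat_gate_smul_sum hP (fun x => if 0 < x then 1 else 0) hmean hvar u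
  simpa only [ite_smul, one_smul, zero_smul, ite_mul, one_mul, zero_mul, ite_pow, one_pow,
    zero_pow two_ne_zero, hm.variance_gate hP, hprob] using hcov

/-- latent summation model. For `X = Σ_{m'} y_{m'} u_{m'}` with
independent standardized Bernoulli `y_{m'}` and `g = X · 1{y_m > 0}`, the covariance
matrix of `g` equals `(1 − q_m)² u_m u_mᵀ + q_m (I − u_m u_mᵀ)`. -/
theorem stmt3 {Ω : Type*} [Fintype Ω] {d : ℕ}
    (u : Fin d → Fin d → ℝ)
    (hu : ∀ m m', u m ⬝ᵥ u m' = if m = m' then (1 : ℝ) else 0)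
    (P : Ω → ℝ) (hP : ∀ ω, 0 ≤ P ω) (hPsum : ∑ ω : Ω, P ω = 1)
    (q : Fin d → ℝ) (hq0 : ∀ m', 0 < q m') (hq1 : ∀ m', q m' < 1)
    (y : Fin d → Ω → ℝ)
    (hval : ∀ m' ω, y m' ω = Real.sqrt ((1 - q m') / q m') ∨
      y m' ω = -Real.sqrt (q m' / (1 - q m')))
    (hprob : ∀ m', (∑ ω, if y m' ω = Real.sqrt ((1 - q m') / q m') then P ω else 0) = q m')
    (hindep : ∀ v : Fin d → ℝ,
      (∑ ω, if (∀ m', y m' ω = v m') then P ω else 0) =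
        ∏ m', ∑ ω, if y m' ω = v m' then P ω else 0)
    (m : Fin d) :
    let X : Ω → Fin d → ℝ := fun ω => ∑ m', y m' ω • u m'
    let g : Ω → Fin d → ℝ := fun ω => if 0 < y m ω then X ω else 0
    covMat P g = ((1 - q m) ^ 2) • vecMulVec (u m) (u m) +
      q m • ((1 : Matrix (Fin d) (Fin d) ℝ) - vecMulVec (u m) (u m)) := by
  intro X g
  have hy (j : Fin d) : IsStdBernoulli P (q j) (y j) := ⟨hq0 j, hq1 j, hval j, hprob j⟩
  rw [← sum_erase_vecMulVec_self hu m]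
  exact stmt3_general u hPsum (fun v => by convert hindep v) (hy m)
    (fun j _ => (hy j).expec_eq_zero hPsum) (fun j _ => (hy j).expec_sq hPsum)
end

section
/- Let d ≥ 2 and let A be a map from ℝ^d to symmetric d×d matrices satisfying the Lipschitz condition ‖A(w') − A(w)‖₂ ≤ L ‖w' − w‖₂ for all unit vectors w, w' (operator norm on the left). Suppose w* is a unit vector with A(w*) w* = λ₁ w*, where λ₁ is the largest eigenvalue of A(w*), let λ₂ be the second-largest eigenvalue of A(w*), and suppose λ_gap := λ₁ − λ₂ > L. Then: (1) P⊥_{w*} A(w*) w* = 0, i.e., w* is a critical point of the dynamics ẇ = P⊥_w A(w) w; (2) there exist constants C > 0 and ε₀ > 0 such that for every unit vector u with ⟨u, w*⟩ = 0 and every ε ∈ (0, ε₀), setting v := √(1 − ε²) w* + ε u (a unit vector), one has ⟨u, P⊥_v A(v) v⟩ ≤ −(λ_gap − L) ε + C ε²; in particular ⟨u, P⊥_v A(v) v⟩ < 0 for all sufficiently small ε > 0, so the critical point w* is stable. -/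
open Matrix Finset

/-- Euclidean norm of a vector in `ℝ^d` given by the dot product. -/
noncomputable def euclNorm {d : ℕ} (v : Fin d → ℝ) : ℝ := Real.sqrt (v ⬝ᵥ v)

/-!
Write `v = s w + ε u` with `s = √(1 - ε²)`, and let `t = s u - ε w` be the unit tangent vector at
`v` obtained by rotating `u` along with `w`. Since `P⊥_v u = s t`, the quantity to bound is
`s ⟪t, A(v) v⟫`. The main part `⟪t, A(w) v⟫` equals `-s ε (λ₁ - ⟪u, A(w) u⟫) ≤ -s ε (λ₁ - λ₂)` by
symmetry of `A(w)`. The remainder is at most `s L ‖v - w‖` by Cauchy–Schwarz, and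
`s ‖v - w‖ ≤ ε`, so the Lipschitz error costs no more than `L ε`. The factor `s² = 1 - ε²` in front
of the gap is the source of the higher-order term `(λ₁ - λ₂) ε³`.
-/

open InnerProductSpace WithLp
open scoped RealInnerProductSpace

section InnerProductSpace

variable {E : Type*} [NormedAddCommGroup E] [InnerProductSpace ℝ E]

lemma norm_smul_add_smul_eq_one {w u : E} {s ε : ℝ} (hw : ‖w‖ = 1) (hu : ‖u‖ = 1)
    (huw : ⟪u, w⟫ = 0) (hs : s ^ 2 + ε ^ 2 = 1) : ‖s • w + ε • u‖ = 1 := by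
  have hsq : ‖s • w + ε • u‖ ^ 2 = 1 := by
    simp [norm_add_sq_real, inner_smul_left, inner_smul_right, real_inner_comm u w, huw,
      norm_smul, hw, hu, hs]
  exact (pow_eq_one_iff_of_nonneg (norm_nonneg _) two_ne_zero).1 hsq

lemma norm_smul_sub_smul_eq_one {w u : E} {s ε : ℝ} (hw : ‖w‖ = 1) (hu : ‖u‖ = 1)
    (huw : ⟪u, w⟫ = 0) (hs : s ^ 2 + ε ^ 2 = 1) : ‖s • u - ε • w‖ = 1 := by
  have h := norm_smul_add_smul_eq_one (s := s) (ε := -ε) hu hw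
    (by rwa [real_inner_comm]) (by rwa [neg_sq])
  rwa [neg_smul, ← sub_eq_add_neg] at h

lemma mul_norm_smul_add_smul_sub_le {w u : E} {s ε : ℝ} (hw : ‖w‖ = 1) (hu : ‖u‖ = 1)
    (huw : ⟪u, w⟫ = 0) (hs : s ^ 2 + ε ^ 2 = 1) (hs₀ : 0 ≤ s) (hε : 0 ≤ ε) :
    s * ‖s • w + ε • u - w‖ ≤ ε := by
  have hdist : ‖s • w + ε • u - w‖ ^ 2 = 2 - 2 * s := by
    rw [norm_sub_sq_real, norm_smul_add_smul_eq_one hw hu huw hs, inner_add_left,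
      real_inner_smul_left, real_inner_smul_left, huw, real_inner_self_eq_norm_sq, hw]
    ring
  refine le_of_sq_le_sq ?_ hε
  calc (s * ‖s • w + ε • u - w‖) ^ 2 = ε ^ 2 - (1 - s) ^ 2 * (1 + 2 * s) := by
        rw [mul_pow, hdist]; linear_combination -hs
    _ ≤ ε ^ 2 := sub_le_self _ (by positivity)

lemma inner_one_sub_rankOne_smul_add_smul {w u : E} {s ε : ℝ} (hu : ‖u‖ = 1)
    (huw : ⟪u, w⟫ = 0) (hs : s ^ 2 + ε ^ 2 = 1) (y : E) :
    ⟪u, (1 - rankOne ℝ (s • w + ε • u) (s • w + ε • u)) y⟫ = s * ⟪s • u - ε • w, y⟫ := by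
  simp only [_root_.sub_apply, one_apply_eq_self, rankOne_apply, inner_sub_left,
    inner_sub_right, inner_add_left, inner_add_right, real_inner_smul_left,
    real_inner_smul_right, real_inner_self_eq_norm_sq, hu, huw]
  linear_combination -⟪u, y⟫ * hs

lemma inner_smul_sub_smul_map_smul_add_smul {T : E →ₗ[ℝ] E} (hT : T.IsSymmetric) {w u : E}
    {lam : ℝ} (hTw : T w = lam • w) (hw : ‖w‖ = 1) (huw : ⟪u, w⟫ = 0) (s ε : ℝ) :
    ⟪s • u - ε • w, T (s • w + ε • u)⟫ = -(s * ε * (lam - ⟪u, T u⟫)) := by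
  have hwTu : ⟪w, T u⟫ = 0 := by
    rw [← hT, hTw, real_inner_smul_left, real_inner_comm, huw, mul_zero]
  simp only [map_add, map_smul, hTw, inner_sub_left, inner_add_right, real_inner_smul_left,
    real_inner_smul_right, real_inner_self_eq_norm_sq, hw, huw, hwTu]
  ring

theorem inner_one_sub_rankOne_le_of_norm_sub_le {T : E →ₗ[ℝ] E} (hT : T.IsSymmetric) {w u y : E}
    {L lam₁ lam₂ s ε : ℝ} (hTw : T w = lam₁ • w) (hw : ‖w‖ = 1) (hu : ‖u‖ = 1)
    (huw : ⟪u, w⟫ = 0) (hTu : ⟪u, T u⟫ ≤ lam₂) (hs : s ^ 2 + ε ^ 2 = 1) (hs₀ : 0 ≤ s)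
    (hε : 0 ≤ ε) (hL : 0 ≤ L)
    (hy : ‖y - T (s • w + ε • u)‖ ≤ L * ‖s • w + ε • u - w‖) :
    ⟪u, (1 - rankOne ℝ (s • w + ε • u) (s • w + ε • u)) y⟫ ≤
      -((lam₁ - lam₂) - L) * ε + (lam₁ - lam₂) * ε ^ 3 := by
  set v := s • w + ε • u
  set t := s • u - ε • w
  have hmain : ⟪t, T v⟫ ≤ -(s * ε * (lam₁ - lam₂)) := by
    rw [inner_smul_sub_smul_map_smul_add_smul hT hTw hw huw]
    gcongr
  have herror : s * ⟪t, y - T v⟫ ≤ L * ε := by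
    calc s * ⟪t, y - T v⟫ ≤ s * (‖t‖ * ‖y - T v‖) := by gcongr; exact real_inner_le_norm t _
      _ = s * ‖y - T v‖ := by rw [norm_smul_sub_smul_eq_one hw hu huw hs, one_mul]
      _ ≤ s * (L * ‖v - w‖) := by gcongr
      _ = L * (s * ‖v - w‖) := by ring
      _ ≤ L * ε := by gcongr; exact mul_norm_smul_add_smul_sub_le hw hu huw hs hs₀ hε
  calc ⟪u, (1 - rankOne ℝ v v) y⟫ = s * ⟪t, y⟫ := inner_one_sub_rankOne_smul_add_smul hu huw hs y
    _ = s * ⟪t, T v⟫ + s * ⟪t, y - T v⟫ := by rw [inner_sub_right]; ring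
    _ ≤ s * -(s * ε * (lam₁ - lam₂)) + L * ε := by gcongr
    _ = -((lam₁ - lam₂) - L) * ε + (lam₁ - lam₂) * ε ^ 3 := by
      linear_combination -(ε * (lam₁ - lam₂)) * hs

-- The antipode `-w` is a unit vector at positive distance from `w`.
lemma nonneg_of_forall_norm_le_mul_norm_sub {G : Type*} [SeminormedAddGroup G] {f : E → G} {w : E}
    {L : ℝ} (hw : ‖w‖ = 1) (hf : ∀ v, ‖v‖ = 1 → ‖f v‖ ≤ L * ‖v - w‖) : 0 ≤ L := by
  have hdist : 0 < ‖-w - w‖ := by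
    rw [← neg_add', norm_neg, ← two_smul ℝ w, norm_smul, hw]
    norm_num
  exact nonneg_of_mul_nonneg_left ((norm_nonneg _).trans (hf (-w) (by rwa [norm_neg]))) hdist

-- `F` plays the role of the field `v ↦ A(v) v` and `T` that of `A(w)`.
theorem stmt5_general {F : E → E} {T : E →ₗ[ℝ] E} (hT : T.IsSymmetric) {w : E} (hw : ‖w‖ = 1)
    {L lam₁ lam₂ : ℝ} (hF : ∀ v, ‖v‖ = 1 → ‖F v - T v‖ ≤ L * ‖v - w‖) (hTw : T w = lam₁ • w)
    (hlam₂ : ∀ u, ⟪u, w⟫ = 0 → ⟪u, T u⟫ ≤ lam₂ * ‖u‖ ^ 2) (hgap : L < lam₁ - lam₂) :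
    (1 - rankOne ℝ w w) (F w) = 0 ∧
    (∃ C ε₀ : ℝ, 0 < C ∧ 0 < ε₀ ∧
      ∀ (u : E) (ε : ℝ), ‖u‖ = 1 → ⟪u, w⟫ = 0 → 0 < ε → ε < ε₀ →
        let v := √(1 - ε ^ 2) • w + ε • u
        ⟪u, (1 - rankOne ℝ v v) (F v)⟫ ≤ -((lam₁ - lam₂) - L) * ε + C * ε ^ 2) ∧
    (∃ ε₁ : ℝ, 0 < ε₁ ∧
      ∀ (u : E) (ε : ℝ), ‖u‖ = 1 → ⟪u, w⟫ = 0 → 0 < ε → ε < ε₁ →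
        let v := √(1 - ε ^ 2) • w + ε • u
        ⟪u, (1 - rankOne ℝ v v) (F v)⟫ < 0) := by
  have hFw : F w = T w := by simpa [sub_eq_zero] using hF w hw
  have hL : 0 ≤ L := nonneg_of_forall_norm_le_mul_norm_sub hw hF
  have hgap₀ : 0 < lam₁ - lam₂ := hL.trans_lt hgap
  have hbound : ∀ (u : E) (ε : ℝ), ‖u‖ = 1 → ⟪u, w⟫ = 0 → 0 < ε → ε < 1 →
      let v := √(1 - ε ^ 2) • w + ε • u
      ⟪u, (1 - rankOne ℝ v v) (F v)⟫ ≤ -((lam₁ - lam₂) - L) * ε + (lam₁ - lam₂) * ε ^ 2 := by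
    intro u ε hu huw hε hε₁ v
    have hs : √(1 - ε ^ 2) ^ 2 + ε ^ 2 = 1 := by rw [Real.sq_sqrt (by nlinarith)]; ring
    have hTu : ⟪u, T u⟫ ≤ lam₂ := by simpa [hu] using hlam₂ u huw
    have hFv : ‖F v - T v‖ ≤ L * ‖v - w‖ := hF v (norm_smul_add_smul_eq_one hw hu huw hs)
    calc ⟪u, (1 - rankOne ℝ v v) (F v)⟫
        ≤ -((lam₁ - lam₂) - L) * ε + (lam₁ - lam₂) * ε ^ 3 :=
          inner_one_sub_rankOne_le_of_norm_sub_le hT hTw hw hu huw hTu hs (Real.sqrt_nonneg _)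
            hε.le hL hFv
      _ ≤ -((lam₁ - lam₂) - L) * ε + (lam₁ - lam₂) * ε ^ 2 := by
          gcongr _ + _ * ?_
          exact pow_le_pow_of_le_one hε.le hε₁.le (by norm_num)
  refine ⟨?_, ⟨lam₁ - lam₂, 1, hgap₀, one_pos, hbound⟩,
    min 1 ((lam₁ - lam₂ - L) / (lam₁ - lam₂)),
    lt_min one_pos (div_pos (sub_pos.2 hgap) hgap₀), fun u ε hu huw hε hε₁ ↦ ?_⟩
  · simp [hFw, hTw, hw]
  · have hε₂ : ε * (lam₁ - lam₂) < lam₁ - lam₂ - L :=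
      (lt_div_iff₀ hgap₀).1 (hε₁.trans_le (min_le_right _ _))
    have hneg : -((lam₁ - lam₂) - L) * ε + (lam₁ - lam₂) * ε ^ 2 < 0 := by
      linear_combination mul_lt_mul_of_pos_left hε₂ hε
    exact (hbound u ε hu huw hε (hε₁.trans_le (min_le_left _ _))).trans_lt hneg

end InnerProductSpace

section EuclideanSpace

variable {n : Type*}

lemma forall_euclideanSpace_iff {p : EuclideanSpace ℝ n → Prop} :
    (∀ v, p v) ↔ ∀ v : n → ℝ, p (toLp 2 v) :=
  (WithLp.equiv 2 (n → ℝ)).symm.forall_congr_right.symm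

variable [Fintype n]

lemma inner_toLp_toLp_eq_dotProduct (u v : n → ℝ) : ⟪toLp 2 u, toLp 2 v⟫ = u ⬝ᵥ v := by
  rw [EuclideanSpace.inner_toLp_toLp, star_trivial, dotProduct_comm]

lemma norm_toLp_eq_one_iff {v : n → ℝ} : ‖toLp 2 v‖ = 1 ↔ v ⬝ᵥ v = 1 := by
  rw [norm_eq_sqrt_real_inner, inner_toLp_toLp_eq_dotProduct, Real.sqrt_eq_one]

lemma norm_toLp_eq_euclNorm {d : ℕ} (v : Fin d → ℝ) : ‖toLp 2 v‖ = euclNorm v := by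
  rw [norm_eq_sqrt_real_inner, inner_toLp_toLp_eq_dotProduct, euclNorm]

variable [DecidableEq n]

lemma one_sub_rankOne_toLp (v y : n → ℝ) :
    (1 - rankOne ℝ (toLp 2 v) (toLp 2 v)) (toLp 2 y) = toLp 2 ((1 - vecMulVec v v) *ᵥ y) := by
  simp [sub_mulVec, vecMulVec_mulVec, inner_toLp_toLp_eq_dotProduct]

lemma toEuclideanLin_toLp_eq_smul {M : Matrix n n ℝ} {w : n → ℝ} {c : ℝ} (h : M *ᵥ w = c • w) :
    M.toEuclideanLin (toLp 2 w) = c • toLp 2 w := by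
  rw [toLpLin_toLp, toLin'_apply, h, toLp_smul]

lemma inner_toEuclideanLin_le {M : Matrix n n ℝ} {w : n → ℝ} {c : ℝ}
    (h : ∀ v, v ⬝ᵥ w = 0 → v ⬝ᵥ M *ᵥ v ≤ c * (v ⬝ᵥ v)) (u : EuclideanSpace ℝ n)
    (hu : ⟪u, toLp 2 w⟫ = 0) : ⟪u, M.toEuclideanLin u⟫ ≤ c * ‖u‖ ^ 2 := by
  obtain ⟨v⟩ := u
  rw [inner_toLp_toLp_eq_dotProduct] at hu
  simpa only [inner_toLp_toLp_eq_dotProduct, ← real_inner_self_eq_norm_sq, toLpLin_toLp,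
    toLin'_apply] using h v hu

lemma norm_toLp_mulVec_sub_toEuclideanLin_le {d : ℕ}
    {A : (Fin d → ℝ) → Matrix (Fin d) (Fin d) ℝ} {w : Fin d → ℝ} {L : ℝ}
    (h : ∀ v, v ⬝ᵥ v = 1 → euclNorm ((A v - A w) *ᵥ v) ≤ L * euclNorm (v - w) * euclNorm v)
    (v : EuclideanSpace ℝ (Fin d)) (hv : ‖v‖ = 1) :
    ‖toLp 2 (A v.ofLp *ᵥ v.ofLp) - (A w).toEuclideanLin v‖ ≤ L * ‖v - toLp 2 w‖ := by
  obtain ⟨v⟩ := v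
  simpa only [sub_mulVec, ← norm_toLp_eq_euclNorm, hv, mul_one, toLpLin_toLp, toLin'_apply,
    toLp_sub] using h v (norm_toLp_eq_one_iff.1 hv)

end EuclideanSpace

/-- local stability of `w*` for the dynamics `ẇ = P⊥_w A(w) w`.
If `A` is symmetric-matrix valued and `L`-Lipschitz (in operator norm) on the unit
sphere, `w*` is a unit eigenvector of `A(w*)` for its largest eigenvalue `λ₁`, and the
eigenvalue gap `λ₁ − λ₂` exceeds `L`, then `w*` is a critical point, and perturbations
`v = √(1−ε²) w* + ε u` satisfy `⟨u, P⊥_v A(v) v⟩ ≤ −(λ_gap − L) ε + C ε²`, which is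
negative for all sufficiently small `ε > 0`: the critical point is stable. -/
theorem stmt5 {d : ℕ} (hd : 2 ≤ d) (L : ℝ)
    (A : (Fin d → ℝ) → Matrix (Fin d) (Fin d) ℝ)
    (hsymm : ∀ w, (A w).IsSymm)
    (hLip : ∀ w w' : Fin d → ℝ, w ⬝ᵥ w = 1 → w' ⬝ᵥ w' = 1 →
      ∀ v : Fin d → ℝ, euclNorm ((A w' - A w).mulVec v) ≤ L * euclNorm (w' - w) * euclNorm v)
    (wstar : Fin d → ℝ) (hwstar : wstar ⬝ᵥ wstar = 1)
    (lam1 lam2 : ℝ)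
    (heig : (A wstar).mulVec wstar = lam1 • wstar)
    (hmax : ∀ (μ : ℝ) (v : Fin d → ℝ), v ≠ 0 → (A wstar).mulVec v = μ • v → μ ≤ lam1)
    (hlam2 : ∀ v : Fin d → ℝ, v ⬝ᵥ wstar = 0 →
      v ⬝ᵥ (A wstar).mulVec v ≤ lam2 * (v ⬝ᵥ v))
    (hlam2attained : ∃ v : Fin d → ℝ, v ≠ 0 ∧ v ⬝ᵥ wstar = 0 ∧
      (A wstar).mulVec v = lam2 • v)
    (hgap : L < lam1 - lam2) :
    -- (1) `w*` is a critical point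
    ((1 : Matrix (Fin d) (Fin d) ℝ) - vecMulVec wstar wstar).mulVec
        ((A wstar).mulVec wstar) = 0 ∧
    -- (2) quantitative stability of perturbations
    (∃ C ε₀ : ℝ, 0 < C ∧ 0 < ε₀ ∧
      ∀ (u : Fin d → ℝ) (ε : ℝ), u ⬝ᵥ u = 1 → u ⬝ᵥ wstar = 0 → 0 < ε → ε < ε₀ →
        let v : Fin d → ℝ := Real.sqrt (1 - ε ^ 2) • wstar + ε • u
        u ⬝ᵥ (((1 : Matrix (Fin d) (Fin d) ℝ) - vecMulVec v v).mulVec ((A v).mulVec v)) ≤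
          -((lam1 - lam2) - L) * ε + C * ε ^ 2) ∧
    -- in particular, negativity for all sufficiently small ε > 0
    (∃ ε₁ : ℝ, 0 < ε₁ ∧
      ∀ (u : Fin d → ℝ) (ε : ℝ), u ⬝ᵥ u = 1 → u ⬝ᵥ wstar = 0 → 0 < ε → ε < ε₁ →
        let v : Fin d → ℝ := Real.sqrt (1 - ε ^ 2) • wstar + ε • u
        u ⬝ᵥ (((1 : Matrix (Fin d) (Fin d) ℝ) - vecMulVec v v).mulVec ((A v).mulVec v)) < 0) := by
  simpa only [forall_euclideanSpace_iff, ← toLp_smul, ← toLp_add, one_sub_rankOne_toLp,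
    inner_toLp_toLp_eq_dotProduct, norm_toLp_eq_one_iff, toLp_eq_zero] using
    stmt5_general (isSymmetric_toEuclideanLin_iff.2 (isHermitian_iff_isSymm.2 (hsymm wstar)))
      (norm_toLp_eq_one_iff.2 hwstar)
      (norm_toLp_mulVec_sub_toEuclideanLin_le fun v hv ↦ hLip wstar v hwstar hv v)
      (toEuclideanLin_toLp_eq_smul heig) (inner_toEuclideanLin_le hlam2) hgap
end

section
/- Let A be a symmetric positive definite d×d matrix with eigenvalues λ₁ ≥ λ₂ ≥ … ≥ λ_d > 0 and let φ₁ be a unit eigenvector of A for λ₁. Let w be a unit vector with c := ⟨φ₁, w⟩ > 0, and define μ := ((1 + c)/(2c²)) · (λ₂/λ₁)². Then, letting d' := ⟨φ₁, A w / ‖A w‖₂⟩ (the inner product of φ₁ with the power-iteration update of w), one has 1 − d' ≤ μ (1 − c). -/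
open Matrix Finset

/-!
Let `θ` be the angle from `φ₁` to `w`. Applying `A` stretches the `φ₁`-component of `w` by `λ₁` and
the orthogonal component by at most `λ₂`, so `tan θ` shrinks at least by the factor `λ₂ / λ₁`.
Moreover `1 - cos θ ≤ tan² θ / 2 = (1 + cos θ) / (2 cos² θ) * (1 - cos θ)`; apply the inequality to
the angle of `A w` and the equality to that of `w`.
-/

lemma tan_sq_div_two_eq {θ : ℝ} (h : Real.cos θ ≠ 0) :
    Real.tan θ ^ 2 / 2 = (1 + Real.cos θ) / (2 * Real.cos θ ^ 2) * (1 - Real.cos θ) := by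
  rw [Real.tan_eq_sin_div_cos, div_pow, Real.sin_sq]
  field_simp
  ring

lemma one_sub_cos_le_tan_sq_div_two {θ : ℝ} (h : 0 < Real.cos θ) :
    1 - Real.cos θ ≤ Real.tan θ ^ 2 / 2 := by
  rw [tan_sq_div_two_eq h.ne']
  have hle : Real.cos θ ≤ 1 := Real.cos_le_one θ
  have hcoeff : 1 ≤ (1 + Real.cos θ) / (2 * Real.cos θ ^ 2) := by
    rw [one_le_div (by positivity)]
    nlinarith
  exact le_mul_of_one_le_left (sub_nonneg.mpr hle) hcoeff

section InnerProductSpace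

open InnerProductGeometry
open scoped RealInnerProductSpace

variable {E : Type*} [NormedAddCommGroup E] [InnerProductSpace ℝ E]

lemma exists_eq_smul_add_of_inner_pos {φ w : E} (h : 0 < ⟪φ, w⟫) :
    ∃ (a : ℝ) (u : E), 0 < a ∧ ⟪φ, u⟫ = 0 ∧ w = a • φ + u := by
  have hφ : 0 < ⟪φ, φ⟫ := real_inner_self_pos.mpr fun h0 => by simp [h0] at h
  refine ⟨⟪φ, w⟫ / ⟪φ, φ⟫, w - (⟪φ, w⟫ / ⟪φ, φ⟫) • φ, div_pos h hφ, ?_, by abel⟩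
  rw [inner_sub_right, real_inner_smul_right, div_mul_cancel₀ _ hφ.ne', sub_self]

lemma tan_angle_smul_add_of_inner_eq_zero {φ u : E} {a : ℝ} (ha : 0 < a) (h : ⟪φ, u⟫ = 0) :
    Real.tan (angle φ (a • φ + u)) = ‖u‖ / (a * ‖φ‖) := by
  have hau : ⟪a • φ, u⟫ = 0 := by rw [real_inner_smul_left, h, mul_zero]
  rw [← angle_smul_left_of_pos φ _ ha, tan_angle_add_of_inner_eq_zero hau,
    norm_smul_of_nonneg ha.le]

lemma cos_angle_pos_of_inner_pos {x y : E} (h : 0 < ⟪x, y⟫) : 0 < Real.cos (angle x y) := by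
  rw [cos_angle]
  exact div_pos h (h.trans_le (real_inner_le_norm x y))

section PowerIteration

variable {T : E →ₗ[ℝ] E} {φ w : E} {lam σ : ℝ}

lemma tan_angle_map_le (hlam : 0 < lam) (hright : T φ = lam • φ)
    (hleft : ∀ x, ⟪φ, T x⟫ = lam * ⟪φ, x⟫) (hσ : ∀ u, ⟪φ, u⟫ = 0 → ‖T u‖ ≤ σ * ‖u‖)
    (hw : 0 < ⟪φ, w⟫) :
    Real.tan (angle φ (T w)) ≤ σ / lam * Real.tan (angle φ w) := by
  obtain ⟨a, u, ha, hu, rfl⟩ := exists_eq_smul_add_of_inner_pos hw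
  have hTu : ⟪φ, T u⟫ = 0 := by rw [hleft, hu, mul_zero]
  have hT : T (a • φ + u) = (lam * a) • φ + T u := by
    rw [map_add, map_smul, hright, smul_smul, mul_comm]
  rw [hT, tan_angle_smul_add_of_inner_eq_zero (by positivity) hTu,
    tan_angle_smul_add_of_inner_eq_zero ha hu, div_mul_div_comm, mul_assoc lam]
  gcongr
  exact hσ u hu

lemma one_sub_cos_angle_map_le (hlam : 0 < lam) (hright : T φ = lam • φ)
    (hleft : ∀ x, ⟪φ, T x⟫ = lam * ⟪φ, x⟫) (hσ : ∀ u, ⟪φ, u⟫ = 0 → ‖T u‖ ≤ σ * ‖u‖)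
    (hw : 0 < ⟪φ, w⟫) :
    1 - Real.cos (angle φ (T w)) ≤
      (1 + Real.cos (angle φ w)) / (2 * Real.cos (angle φ w) ^ 2) * (σ / lam) ^ 2 *
        (1 - Real.cos (angle φ w)) := by
  have hTw : 0 < ⟪φ, T w⟫ := hleft w ▸ mul_pos hlam hw
  have htan : 0 ≤ Real.tan (angle φ (T w)) := by
    rw [Real.tan_eq_sin_div_cos]
    exact div_nonneg (sin_angle_nonneg _ _) (cos_angle_pos_of_inner_pos hTw).le
  calc 1 - Real.cos (angle φ (T w))
      ≤ Real.tan (angle φ (T w)) ^ 2 / 2 :=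
        one_sub_cos_le_tan_sq_div_two (cos_angle_pos_of_inner_pos hTw)
    _ ≤ (σ / lam * Real.tan (angle φ w)) ^ 2 / 2 := by
        gcongr
        exact tan_angle_map_le hlam hright hleft hσ hw
    _ = (σ / lam) ^ 2 * (Real.tan (angle φ w) ^ 2 / 2) := by ring
    _ = _ := by
        rw [tan_sq_div_two_eq (cos_angle_pos_of_inner_pos hw).ne']
        ring

theorem stmt6_general (hlam : 0 < lam) (hright : T φ = lam • φ)
    (hleft : ∀ x, ⟪φ, T x⟫ = lam * ⟪φ, x⟫) (hσ : ∀ u, ⟪φ, u⟫ = 0 → ‖T u‖ ≤ σ * ‖u‖)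
    (hφ : ‖φ‖ = 1) (hw : ‖w‖ = 1) (hc : 0 < ⟪φ, w⟫) :
    1 - ⟪φ, T w⟫ / ‖T w‖ ≤
      (1 + ⟪φ, w⟫) / (2 * ⟪φ, w⟫ ^ 2) * (σ / lam) ^ 2 * (1 - ⟪φ, w⟫) := by
  simpa only [cos_angle, hφ, hw, one_mul, div_one] using
    one_sub_cos_angle_map_le hlam hright hleft hσ hc

end PowerIteration

section Eigenbasis

variable {ι : Type*} [Fintype ι] {T : E →ₗ[ℝ] E} {b : OrthonormalBasis ι ℝ E} {lam : ι → ℝ}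

lemma inner_map_eq_mul_inner_of_eigenbasis (hT : ∀ i, T (b i) = lam i • b i) (i : ι) (x : E) :
    ⟪b i, T x⟫ = lam i * ⟪b i, x⟫ := by
  classical
  conv_lhs => rw [← b.sum_repr' x]
  simp [hT, inner_sum, real_inner_smul_right, b.inner_eq_ite, mul_comm]

lemma norm_map_le_of_eigenbasis (hT : ∀ i, T (b i) = lam i • b i) {k : ι} {σ : ℝ} (hσ : 0 ≤ σ)
    (hlam : ∀ i ≠ k, |lam i| ≤ σ) {u : E} (hu : ⟪b k, u⟫ = 0) : ‖T u‖ ≤ σ * ‖u‖ := by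
  have hcoord (i : ι) : ⟪b i, T u⟫ ^ 2 ≤ σ ^ 2 * ⟪b i, u⟫ ^ 2 := by
    rw [inner_map_eq_mul_inner_of_eigenbasis hT, mul_pow]
    rcases eq_or_ne i k with rfl | hi
    · simp [hu]
    · exact mul_le_mul_of_nonneg_right (sq_le_sq.mpr ((hlam i hi).trans (le_abs_self σ)))
        (sq_nonneg _)
  refine le_of_sq_le_sq ?_ (by positivity)
  rw [mul_pow, ← b.sum_sq_inner_right, ← b.sum_sq_inner_right, Finset.mul_sum]
  exact Finset.sum_le_sum fun i _ => hcoord i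

end Eigenbasis

end InnerProductSpace

section EuclideanSpace

open scoped RealInnerProductSpace

lemma euclNorm_eq_norm_toLp {d : ℕ} (v : Fin d → ℝ) : euclNorm v = ‖WithLp.toLp 2 v‖ := by
  rw [norm_eq_sqrt_real_inner, EuclideanSpace.inner_toLp_toLp, star_trivial, euclNorm]

lemma real_inner_toLp_toLp {ι : Type*} [Fintype ι] (x y : ι → ℝ) :
    ⟪WithLp.toLp 2 x, WithLp.toLp 2 y⟫ = x ⬝ᵥ y := by
  rw [EuclideanSpace.inner_toLp_toLp, star_trivial, dotProduct_comm]

lemma norm_toLp_eq_one {ι : Type*} [Fintype ι] {v : ι → ℝ} (h : v ⬝ᵥ v = 1) :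
    ‖WithLp.toLp 2 v‖ = 1 := by
  rw [norm_eq_sqrt_real_inner, real_inner_toLp_toLp, h, Real.sqrt_one]

lemma exists_orthonormalBasis_toEuclideanLin_eigen {ι : Type*} [Fintype ι] [DecidableEq ι]
    {A : Matrix ι ι ℝ} {lam : ι → ℝ} {φ : ι → ι → ℝ}
    (hortho : ∀ i j, φ i ⬝ᵥ φ j = if i = j then 1 else 0) (heig : ∀ i, A *ᵥ φ i = lam i • φ i) :
    ∃ b : OrthonormalBasis ι ℝ (EuclideanSpace ℝ ι), (∀ i, b i = WithLp.toLp 2 (φ i)) ∧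
      ∀ i, toEuclideanLin A (b i) = lam i • b i := by
  have hφ : Orthonormal ℝ fun i => WithLp.toLp 2 (φ i) :=
    orthonormal_iff_ite.mpr fun i j => (real_inner_toLp_toLp _ _).trans (hortho i j)
  have hspan := hφ.linearIndependent.span_eq_top_of_card_eq_finrank' finrank_euclideanSpace.symm
  have hb (i : ι) : OrthonormalBasis.mk hφ hspan.ge i = WithLp.toLp 2 (φ i) := by
    rw [OrthonormalBasis.coe_mk]
  refine ⟨OrthonormalBasis.mk hφ hspan.ge, hb, fun i => ?_⟩
  rw [hb, toLpLin_toLp, toLin'_apply, heig, WithLp.toLp_smul]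

end EuclideanSpace

/-- bound on the alignment of one power-iteration step. Let `A` be
symmetric positive definite with orthonormal eigenbasis `φ` and decreasing eigenvalues
`λ`, let `w` be a unit vector with `c = ⟨φ₁, w⟩ > 0`, and
`μ = ((1+c)/(2c²))(λ₂/λ₁)²`. Then the power-iteration update `A w / ‖A w‖₂` satisfies
`1 − ⟨φ₁, A w / ‖A w‖₂⟩ ≤ μ (1 − c)`. -/
theorem stmt6 {d : ℕ} (hd : 2 ≤ d)
    (A : Matrix (Fin d) (Fin d) ℝ) (hA : A.IsSymm)
    (lam : Fin d → ℝ) (φ : Fin d → Fin d → ℝ)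
    (hortho : ∀ i j, φ i ⬝ᵥ φ j = if i = j then (1 : ℝ) else 0)
    (heig : ∀ i, A.mulVec (φ i) = lam i • φ i)
    (hsorted : ∀ i j : Fin d, i ≤ j → lam j ≤ lam i)
    (hpos : ∀ i, 0 < lam i)
    (w : Fin d → ℝ) (hw : w ⬝ᵥ w = 1)
    (c : ℝ) (hc : c = φ ⟨0, by omega⟩ ⬝ᵥ w) (hcpos : 0 < c)
    (μ : ℝ)
    (hμ : μ = (1 + c) / (2 * c ^ 2) * (lam ⟨1, by omega⟩ / lam ⟨0, by omega⟩) ^ 2) :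
    1 - (φ ⟨0, by omega⟩ ⬝ᵥ A.mulVec w) / euclNorm (A.mulVec w) ≤ μ * (1 - c) := by
  obtain ⟨b, hb, hAb⟩ := exists_orthonormalBasis_toEuclideanLin_eigen hortho heig
  have hgap (i : Fin d) (hi : i ≠ ⟨0, by omega⟩) : |lam i| ≤ lam ⟨1, by omega⟩ :=
    (abs_of_pos (hpos i)).trans_le <| hsorted _ _ <|
      Nat.one_le_iff_ne_zero.mpr fun h => hi (Fin.ext h)
  subst hc hμ
  simpa only [hb, toLpLin_toLp, toLin'_apply, real_inner_toLp_toLp, ← euclNorm_eq_norm_toLp] using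
    stmt6_general (hpos _) (hAb _) (inner_map_eq_mul_inner_of_eigenbasis hAb _)
      (fun _ => norm_map_le_of_eigenbasis hAb (hpos _).le hgap) (b.norm_eq_one _)
      (norm_toLp_eq_one hw) (by rwa [hb, real_inner_toLp_toLp])
end

section
/- Let 0 ≤ γ < 1, let (w_t)_{t≥0} be a sequence in ℝ^d and (c_t)_{t≥0} a sequence of reals with c_t ≤ 1 for all t, c₀ > 0, and suppose for every t ≥ 0: (i) 1 − c_{t+1} ≤ γ (1 − c_t), and (ii) ‖w_{t+1} − w_t‖₂ ≤ √(2 (1 + γ)(1 − c_t)). Then: (1) 1 − c_t ≤ γ^t (1 − c₀) for all t, so c_t → 1; (2) the sequence (w_t) converges to some limit w* ∈ ℝ^d; (3) for every t, ‖w_t − w₀‖₂ ≤ √(2(1 + γ)(1 − c₀)) / (1 − √γ); and (4) ‖w* − w₀‖₂ ≤ √(2(1 + γ)(1 − c₀)) / (1 − √γ). -/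
open Filter

/-!
Taking square roots in the recurrence shows that `√(1 - c t)`, and with it the step length, decays
geometrically at rate `√γ`. Summing the geometric series makes the trajectory Cauchy and bounds its
total length by `√(2 * (1 + γ) * (1 - c 0)) / (1 - √γ)`.
-/

theorem tendsto_zero_of_le_mul {a : ℕ → ℝ} {γ : ℝ} (hγ0 : 0 ≤ γ) (hγ1 : γ < 1)
    (ha0 : ∀ n, 0 ≤ a n) (ha : ∀ n, a (n + 1) ≤ γ * a n) : Tendsto a atTop (nhds 0) := by
  have hgeom : Tendsto (fun n ↦ γ ^ n * a 0) atTop (nhds 0) := by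
    simpa only [zero_mul] using (tendsto_pow_atTop_nhds_zero_of_lt_one hγ0 hγ1).mul_const (a 0)
  exact squeeze_zero ha0 (fun n ↦ le_geom hγ0 n fun k _ ↦ ha k) hgeom

theorem sqrt_le_mul_sqrt_pow_of_le_mul {a : ℕ → ℝ} {γ : ℝ} (hγ0 : 0 ≤ γ)
    (ha : ∀ n, a (n + 1) ≤ γ * a n) (n : ℕ) : √(a n) ≤ √(a 0) * √γ ^ n := by
  have hsqrt (k : ℕ) : √(a (k + 1)) ≤ √γ * √(a k) :=
    (Real.sqrt_le_sqrt (ha k)).trans_eq (Real.sqrt_mul hγ0 (a k))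
  rw [mul_comm]
  exact le_geom (u := fun k ↦ √(a k)) (Real.sqrt_nonneg γ) n fun k _ ↦ hsqrt k

section PseudoMetricSpace

variable {X : Type*} [PseudoMetricSpace X]

theorem dist_le_div_one_sub_of_le_geometric {f : ℕ → X} {C r : ℝ} (hr : r < 1)
    (hf : ∀ n, dist (f n) (f (n + 1)) ≤ C * r ^ n) (n : ℕ) :
    dist (f 0) (f n) ≤ C / (1 - r) :=
  calc
    dist (f 0) (f n) ≤ ∑ k ∈ Finset.range n, C * r ^ k :=
      dist_le_range_sum_of_dist_le n fun {k} _ ↦ hf k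
    _ ≤ C / (1 - r) :=
      sum_le_hasSum _ (fun k _ ↦ dist_nonneg.trans (hf k)) (aux_hasSum_of_le_geometric hr hf)

theorem stmt9_general [CompleteSpace X] {γ K : ℝ} (hγ0 : 0 ≤ γ) (hγ1 : γ < 1) (hK : 0 ≤ K)
    {w : ℕ → X} {c : ℕ → ℝ} (hc1 : ∀ t, c t ≤ 1)
    (hrec : ∀ t, 1 - c (t + 1) ≤ γ * (1 - c t))
    (hstep : ∀ t, dist (w (t + 1)) (w t) ≤ √(K * (1 - c t))) :
    (∀ t, 1 - c t ≤ γ ^ t * (1 - c 0)) ∧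
    Tendsto c atTop (nhds 1) ∧
    (∃ wstar, Tendsto w atTop (nhds wstar) ∧
      dist wstar (w 0) ≤ √(K * (1 - c 0)) / (1 - √γ)) ∧
    (∀ t, dist (w t) (w 0) ≤ √(K * (1 - c 0)) / (1 - √γ)) := by
  have hc : Tendsto (fun t ↦ 1 - c t) atTop (nhds 0) :=
    tendsto_zero_of_le_mul hγ0 hγ1 (fun t ↦ sub_nonneg.2 (hc1 t)) hrec
  have hKrec (t : ℕ) : K * (1 - c (t + 1)) ≤ γ * (K * (1 - c t)) := by
    rw [mul_left_comm]
    exact mul_le_mul_of_nonneg_left (hrec t) hK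
  have hw (t : ℕ) : dist (w t) (w (t + 1)) ≤ √(K * (1 - c 0)) * √γ ^ t := by
    rw [dist_comm]
    exact (hstep t).trans
      (sqrt_le_mul_sqrt_pow_of_le_mul (a := fun t ↦ K * (1 - c t)) hγ0 hKrec t)
  have hsqrt : √γ < 1 := by rwa [Real.sqrt_lt' one_pos, one_pow]
  obtain ⟨wstar, hwstar⟩ := cauchySeq_tendsto_of_complete (cauchySeq_of_le_geometric _ _ hsqrt hw)
  refine ⟨fun t ↦ le_geom (u := fun t ↦ 1 - c t) hγ0 t fun k _ ↦ hrec k, ?_,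
    ⟨wstar, hwstar, ?_⟩, fun t ↦ ?_⟩
  · simpa only [sub_sub_cancel, sub_zero] using hc.const_sub 1
  · rw [dist_comm]
    exact dist_le_of_le_geometric_of_tendsto₀ _ _ hsqrt hw hwstar
  · rw [dist_comm]
    exact dist_le_div_one_sub_of_le_geometric hsqrt hw t

end PseudoMetricSpace

/-- quantitative convergence of the power-iteration trajectory.
If `0 ≤ γ < 1`, `c t ≤ 1`, `c 0 > 0`, `1 − c (t+1) ≤ γ (1 − c t)` and
`‖w (t+1) − w t‖ ≤ √(2(1+γ)(1 − c t))`, then `1 − c t ≤ γ^t (1 − c 0)`, `c t → 1`,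
the iterates converge to some `w*`, and all iterates (and the limit) stay within distance
`√(2(1+γ)(1−c 0))/(1 − √γ)` of `w 0`. -/
theorem stmt9 {d : ℕ} (γ : ℝ) (hγ0 : 0 ≤ γ) (hγ1 : γ < 1)
    (w : ℕ → EuclideanSpace ℝ (Fin d)) (c : ℕ → ℝ)
    (hc1 : ∀ t, c t ≤ 1) (hc0 : 0 < c 0)
    (hrec : ∀ t, 1 - c (t + 1) ≤ γ * (1 - c t))
    (hstep : ∀ t, ‖w (t + 1) - w t‖ ≤ Real.sqrt (2 * (1 + γ) * (1 - c t))) :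
    (∀ t, 1 - c t ≤ γ ^ t * (1 - c 0)) ∧
    Tendsto c atTop (nhds 1) ∧
    (∃ wstar : EuclideanSpace ℝ (Fin d),
      Tendsto w atTop (nhds wstar) ∧
      ‖wstar - w 0‖ ≤ Real.sqrt (2 * (1 + γ) * (1 - c 0)) / (1 - Real.sqrt γ)) ∧
    (∀ t, ‖w t - w 0‖ ≤ Real.sqrt (2 * (1 + γ) * (1 - c 0)) / (1 - Real.sqrt γ)) := by
  simp only [← dist_eq_norm] at hstep ⊢
  exact stmt9_general hγ0 hγ1 (by positivity) hc1 hrec hstep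
end

section
/- Let b > 0 and y₀ > 0, and let y : [0, T) → ℝ (with T > 0) be differentiable with y(0) = y₀ and y'(t) = (y(t) + b) · y(t) for all t ∈ [0, T). Then y(t) > 0 for all t ∈ [0, T), and for all t ∈ [0, T): y(t) / (y(t) + b) = (y₀ / (y₀ + b)) · e^{b t}. -/
/-!
Both `y` and `y + b` solve a linear homogeneous equation along the trajectory: `y' = (y + b) y` and
`(y + b)' = y (y + b)`. Hence each is its initial value times an exponential, which preserves signs,
and in the quotient the exponents `∫ (y + b)` and `∫ y` differ by `b (t - t₀)`.
-/

open Set intervalIntegral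
open MeasureTheory (volume)

section LinearODE

variable {E : Type*} [NormedAddCommGroup E] [NormedSpace ℝ E]

theorem hasDerivWithinAt_uIcc_integral [CompleteSpace E] {g : ℝ → E} {u v x : ℝ}
    (hg : ContinuousOn g (uIcc u v)) (hx : x ∈ uIcc u v) :
    HasDerivWithinAt (fun r ↦ ∫ τ in u..r, g τ) (g x) (uIcc u v) x := by
  have : Fact (x ∈ uIcc u v) := ⟨hx⟩
  have hint : IntervalIntegrable g volume u x :=
    (hg.mono (uIcc_subset_uIcc_left hx)).intervalIntegrable
  exact integral_hasDerivWithinAt_right hint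
    (hg.stronglyMeasurableAtFilter_nhdsWithin measurableSet_uIcc x) (hg x hx)

theorem eq_of_hasDerivWithinAt_zero {f : ℝ → E} {s : Set ℝ} (hs : Convex ℝ s)
    (hf : ∀ x ∈ s, HasDerivWithinAt f 0 s x) {u v : ℝ} (hu : u ∈ s) (hv : v ∈ s) :
    f v = f u := by
  have hle : ‖f v - f u‖ ≤ 0 * ‖v - u‖ :=
    hs.norm_image_sub_le_of_norm_hasDerivWithin_le hf (fun _ _ ↦ norm_zero.le) hu hv
  rwa [zero_mul, norm_le_zero_iff, sub_eq_zero] at hle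

theorem eq_exp_sub_smul_of_hasDerivWithinAt {A a : ℝ → ℝ} {f : ℝ → E} {s : Set ℝ}
    (hs : Convex ℝ s) (hA : ∀ x ∈ s, HasDerivWithinAt A (a x) s x)
    (hf : ∀ x ∈ s, HasDerivWithinAt f (a x • f x) s x) {u v : ℝ} (hu : u ∈ s) (hv : v ∈ s) :
    f v = Real.exp (A v - A u) • f u := by
  have hderiv : ∀ x ∈ s, HasDerivWithinAt (fun r ↦ Real.exp (-A r) • f r) 0 s x := fun x hx ↦
    ((hA x hx).fun_neg.exp.fun_smul (hf x hx)).congr_deriv (by module)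
  have hconst : Real.exp (-A v) • f v = Real.exp (-A u) • f u :=
    eq_of_hasDerivWithinAt_zero hs hderiv hu hv
  calc f v = Real.exp (A v) • Real.exp (-A v) • f v := by
        rw [smul_smul, ← Real.exp_add, add_neg_cancel, Real.exp_zero, one_smul]
    _ = Real.exp (A v - A u) • f u := by
        rw [hconst, smul_smul, ← Real.exp_add, ← sub_eq_add_neg]

theorem eq_exp_integral_smul_of_hasDerivWithinAt {a : ℝ → ℝ} {f : ℝ → E} {s : Set ℝ}
    (hs : s.OrdConnected) (ha : ContinuousOn a s)
    (hf : ∀ x ∈ s, HasDerivWithinAt f (a x • f x) s x) {u v : ℝ} (hu : u ∈ s) (hv : v ∈ s) :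
    f v = Real.exp (∫ τ in u..v, a τ) • f u := by
  have hsub : uIcc u v ⊆ s := hs.uIcc_subset hu hv
  simpa only [integral_same, sub_zero] using
    eq_exp_sub_smul_of_hasDerivWithinAt (convex_uIcc u v)
      (fun _ ↦ hasDerivWithinAt_uIcc_integral (ha.mono hsub))
      (fun x hx ↦ (hf x (hsub hx)).mono hsub) left_mem_uIcc right_mem_uIcc

end LinearODE

theorem sign_exp_mul (c x : ℝ) : SignType.sign (Real.exp c * x) = SignType.sign x := by
  rw [sign_mul, sign_pos (Real.exp_pos c), one_mul]

theorem stmt15_general {b t₀ : ℝ} {s : Set ℝ} (hs : s.OrdConnected) (ht₀ : t₀ ∈ s) {y : ℝ → ℝ}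
    (hb : y t₀ + b ≠ 0)
    (hderiv : ∀ t ∈ s, HasDerivWithinAt y ((y t + b) * y t) s t) :
    ∀ t ∈ s, SignType.sign (y t) = SignType.sign (y t₀) ∧ y t + b ≠ 0 ∧
      y t / (y t + b) = y t₀ / (y t₀ + b) * Real.exp (b * (t - t₀)) := by
  intro t ht
  have hcont : ContinuousOn y s := HasDerivWithinAt.continuousOn hderiv
  have hsol : y t = Real.exp (∫ τ in t₀..t, (y τ + b)) * y t₀ :=
    eq_exp_integral_smul_of_hasDerivWithinAt hs (hcont.add continuousOn_const) hderiv ht₀ ht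
  have hsol_add : y t + b = Real.exp (∫ τ in t₀..t, y τ) * (y t₀ + b) :=
    eq_exp_integral_smul_of_hasDerivWithinAt (f := fun x ↦ y x + b) hs hcont
      (fun x hx ↦ ((hderiv x hx).add_const b).congr_deriv (mul_comm _ _)) ht₀ ht
  have hexponent : (∫ τ in t₀..t, (y τ + b)) - ∫ τ in t₀..t, y τ = b * (t - t₀) := by
    have hint : IntervalIntegrable y volume t₀ t :=
      (hcont.mono (hs.uIcc_subset ht₀ ht)).intervalIntegrable
    rw [integral_add hint intervalIntegrable_const, integral_const, add_sub_cancel_left,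
      smul_eq_mul, mul_comm]
  refine ⟨?_, ?_, ?_⟩
  · rw [hsol, sign_exp_mul]
  · rw [hsol_add]
    exact mul_ne_zero (Real.exp_ne_zero _) hb
  · calc y t / (y t + b)
        = Real.exp (∫ τ in t₀..t, (y τ + b)) * y t₀ /
            (Real.exp (∫ τ in t₀..t, y τ) * (y t₀ + b)) := by rw [← hsol, ← hsol_add]
      _ = y t₀ / (y t₀ + b) * Real.exp (b * (t - t₀)) := by
        rw [mul_div_mul_comm, ← Real.exp_sub, hexponent, mul_comm]

/-- closed-form solution of the 1-d dynamics `ẏ = (y + b) y`.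
If `b > 0`, `y 0 = y₀ > 0` and `y` solves `y' = (y + b) y` on `[0, T)`, then `y` stays
positive and `y t/(y t + b) = (y₀/(y₀ + b)) e^{b t}` on `[0, T)`. -/
theorem stmt15 (b y₀ T : ℝ) (hb : 0 < b) (hy₀ : 0 < y₀) (hT : 0 < T)
    (y : ℝ → ℝ) (hy0 : y 0 = y₀)
    (hderiv : ∀ t ∈ Set.Ico (0 : ℝ) T,
      HasDerivWithinAt y ((y t + b) * y t) (Set.Ico (0 : ℝ) T) t) :
    ∀ t ∈ Set.Ico (0 : ℝ) T,
      0 < y t ∧ y t / (y t + b) = (y₀ / (y₀ + b)) * Real.exp (b * t) := by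
  subst hy0
  intro t ht
  obtain ⟨hsign, -, hquot⟩ :=
    stmt15_general ordConnected_Ico ⟨le_rfl, hT⟩ (add_pos hy₀ hb).ne' hderiv t ht
  exact ⟨sign_eq_one_iff.mp (hsign.trans (sign_pos hy₀)), by rwa [sub_zero] at hquot⟩
end

section
/- Fix N ≥ 2, K ≥ 1, M ≥ 1, d ≥ 1, d_out ≥ 1. Let x_k[i] ∈ ℝ^d for k ∈ {1,…,K} and i ∈ {1,…,2N} be fixed inputs (with samples i and i + N being the two views of the same datum, written i' := i + N), let α_{ij} ∈ ℝ for 1 ≤ i ≤ N, j ≠ i be pairwise importances, and for two families of real-valued samples (a[i]), (b[i]) define the scalar contrastive covariance C_α[a, b] := Σ_{i=1}^N Σ_{j≠i} α_{ij}(a[i] − a[j])(b[i] − b[j]) − Σ_{i=1}^N (Σ_{j≠i} α_{ij})(a[i] − a[i'])(b[i] − b[i']); define the d×d matrix C_α[x_k, x_{k'}] entrywise by applying C_α to the coordinate samples. For weights W = (w_{km}) ∈ (ℝ^d)^{K×M} and V = (v_{l,km}) ∈ ℝ^{d_out × KM}, set s_{km,k'm'} := Σ_l v_{l,km} v_{l,k'm'},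 define the linear-network outputs f_l[i] := Σ_{k,m} v_{l,km} ⟨w_{km}, x_k[i]⟩, and the energy E(W) := (1/2) Σ_{l=1}^{d_out} C_α[f_l, f_l]. Then: (1) the gradient of E with respect to w_{km} equals Σ_{k',m'} s_{km,k'm'} · C_α[x_k, x_{k'}] · w_{k'm'}; (2) if moreover s_{km,k'm'} = s_{km} · s_{k'm'} for some scalars (s_{km}) (rank-one case), then ∇_{w_{km}} E = s_{km} · b_k(W, V), where b_k(W, V) := Σ_{k',m'} s_{k'm'} C_α[x_k, x_{k'}] w_{k'm'} does not depend on m; consequently for all m, m': s_{km'} · ∇_{w_{km}} E = s_{km} · ∇_{w_{km'}} E, i.e., the gradients of all weights in the same receptive field are pairwise colinear. -/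
open Matrix Finset
open scoped RealInnerProductSpace

/-!
The energy is half of a quadratic form `Q(W, W)` in the weights, so its derivative at `W` is
`Q(·, W)`. Moving only the weight `W p` means testing `Q(·, W)` on families supported at `p`,
which picks out the row `∑ q, s p q • C[x p, x q] (W q)` of the block matrix of `Q`. When `s` has
rank one, this row is `s p` times a vector that depends on `p` only through the input `x p`.
-/

section BilinearForm

variable {R A m n : Type*} [CommRing R] [AddCommGroup A] [Module R A]

/-- The matrix `C[a, b]` of values of a bilinear form `B` on two families of vectors. With `B` the
contrastive covariance and `a r`, `b c` the samples of coordinates `r` and `c` of two inputs, it is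
the matrix `C_α[x_k, x_{k'}]`. -/
def crossGram (B : LinearMap.BilinForm R A) (a : m → A) (b : n → A) : Matrix m n R :=
  Matrix.of fun r c => B (a r) (b c)

theorem dotProduct_crossGram_mulVec [Fintype m] [Fintype n] (B : LinearMap.BilinForm R A)
    (a : m → A) (b : n → A) (g : m → R) (h : n → R) :
    g ⬝ᵥ crossGram B a b *ᵥ h =
      B (Fintype.linearCombination R a g) (Fintype.linearCombination R b h) := by
  rw [Fintype.linearCombination_apply, LinearMap.BilinForm.sum_left]
  simp only [Fintype.linearCombination_apply, LinearMap.BilinForm.sum_right,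
    LinearMap.BilinForm.smul_left, LinearMap.BilinForm.smul_right, crossGram, mulVec, dotProduct,
    of_apply, Finset.mul_sum, mul_assoc, mul_comm (h _)]

end BilinearForm

section LinearNetwork

variable {A ι o m n : Type*} [AddCommGroup A] [Module ℝ A] [Fintype ι] [Fintype n]

/-- The output `W ↦ ∑ p, c p • ⟨W p, x p⟩` of a linear network with one output unit. The weight
`W p` has its own input `x p`, given by its coordinates `x p r : A`, where `A` is the space of
samples of a scalar quantity; a receptive field is a set of weights sharing one input. -/
noncomputable def networkOutput (x : ι → n → A) (c : ι → ℝ) : (ι → EuclideanSpace ℝ n) →ₗ[ℝ] A :=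
  ∑ p, c p • Fintype.linearCombination ℝ (x p) ∘ₗ
    (WithLp.linearEquiv 2 ℝ (n → ℝ)).toLinearMap ∘ₗ LinearMap.proj p

theorem networkOutput_apply (x : ι → n → A) (c : ι → ℝ) (W : ι → EuclideanSpace ℝ n) :
    networkOutput x c W = ∑ p, c p • Fintype.linearCombination ℝ (x p) (W p) := by
  simp [networkOutput]

theorem networkOutput_single [DecidableEq ι] (x : ι → n → A) (c : ι → ℝ) (p : ι)
    (h : EuclideanSpace ℝ n) :
    networkOutput x c (Pi.single p h) = c p • Fintype.linearCombination ℝ (x p) h := by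
  rw [networkOutput_apply, Finset.sum_eq_single_of_mem p (mem_univ p)]
  · rw [Pi.single_eq_same]
  · intro q _ hq
    rw [Pi.single_eq_of_ne hq, WithLp.ofLp_zero, map_zero, smul_zero]

/-- The bilinear form `∑ l, B (f_l W) (f_l W')` on weight families, where `B` measures the
covariance of two samples and `v` holds the output weights. Half of its value at `(W, W)` is the
energy. -/
noncomputable def energyForm [Fintype o] (B : LinearMap.BilinForm ℝ A) (x : ι → n → A)
    (v : o → ι → ℝ) : LinearMap.BilinForm ℝ (ι → EuclideanSpace ℝ n) :=
  ∑ l, B.comp (networkOutput x (v l)) (networkOutput x (v l))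

theorem energyForm_apply [Fintype o] (B : LinearMap.BilinForm ℝ A) (x : ι → n → A)
    (v : o → ι → ℝ) (W W' : ι → EuclideanSpace ℝ n) :
    energyForm B x v W W' = ∑ l, B (networkOutput x (v l) W) (networkOutput x (v l) W') := by
  simp [energyForm]

theorem energyForm_isSymm [Fintype o] {B : LinearMap.BilinForm ℝ A} (hB : B.IsSymm)
    (x : ι → n → A) (v : o → ι → ℝ) : (energyForm B x v).IsSymm :=
  ⟨fun W W' => by simp only [energyForm_apply, hB.eq (networkOutput x _ W)]⟩

/-- The vector `∑ q, c q • C[a, x q] (W q)`, through which the inputs `x q`, weighted by `c q`,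
drive a weight with input `a`. For `a = x p` and `c q = s p q` it is the gradient with respect to
`W p`; in the rank-one case `s p q = s p * s q`, the choice `c = s` gives the vector `b_k`. -/
noncomputable def weightedDrive (B : LinearMap.BilinForm ℝ A) (a : m → A) (x : ι → n → A)
    (c : ι → ℝ) (W : ι → EuclideanSpace ℝ n) : EuclideanSpace ℝ m :=
  WithLp.toLp 2 (∑ q, c q • crossGram B a (x q) *ᵥ W q)

theorem weightedDrive_const_mul (B : LinearMap.BilinForm ℝ A) (a : m → A) (x : ι → n → A)
    (r : ℝ) (c : ι → ℝ) (W : ι → EuclideanSpace ℝ n) :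
    weightedDrive B a x (fun q => r * c q) W = r • weightedDrive B a x c W := by
  simp only [weightedDrive, mul_smul, ← Finset.smul_sum, WithLp.toLp_smul]

theorem inner_weightedDrive [Fintype m] (B : LinearMap.BilinForm ℝ A) (a : m → A) (x : ι → n → A)
    (c : ι → ℝ) (W : ι → EuclideanSpace ℝ n) (h : EuclideanSpace ℝ m) :
    ⟪weightedDrive B a x c W, h⟫ =
      B (Fintype.linearCombination ℝ a h) (networkOutput x c W) := by
  rw [EuclideanSpace.inner_eq_star_dotProduct, star_trivial, networkOutput_apply, map_sum]
  simp only [weightedDrive, dotProduct_sum, dotProduct_smul, dotProduct_crossGram_mulVec, map_smul]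

theorem energyForm_single_left [DecidableEq ι] [Fintype o] (B : LinearMap.BilinForm ℝ A)
    (x : ι → n → A) (v : o → ι → ℝ) (p : ι) (h : EuclideanSpace ℝ n)
    (W : ι → EuclideanSpace ℝ n) :
    energyForm B x v (Pi.single p h) W =
      ⟪weightedDrive B (x p) x (fun q => ∑ l, v l p * v l q) W, h⟫ := by
  have networkOutput_sum :
      networkOutput x (fun q => ∑ l, v l p * v l q) W = ∑ l, v l p • networkOutput x (v l) W := by
    simp only [networkOutput_apply, Finset.sum_smul, Finset.smul_sum, smul_smul]
    exact Finset.sum_comm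
  rw [inner_weightedDrive, networkOutput_sum, energyForm_apply, map_sum]
  simp only [networkOutput_single, map_smul, LinearMap.smul_apply]

end LinearNetwork

section Gradient

theorem hasFDerivAt_half_mul_self_of_symm {E : Type*} [NormedAddCommGroup E] [NormedSpace ℝ E]
    (Q : E →L[ℝ] E →L[ℝ] ℝ) (hQ : ∀ u w, Q u w = Q w u) (w : E) :
    HasFDerivAt (fun u => 1 / 2 * Q u u) (Q w) w := by
  refine ((Q.hasFDerivAt_of_bilinear (hasFDerivAt_id w) (hasFDerivAt_id w)).const_mul
    (1 / 2 : ℝ)).congr_fderiv ?_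
  ext h
  change 1 / 2 * (Q w h + Q h w) = Q w h
  rw [hQ h w]
  ring

variable {A ι o n : Type*} [AddCommGroup A] [Module ℝ A] [Fintype ι] [DecidableEq ι] [Fintype o]
  [Fintype n]

theorem hasGradientAt_energyForm_update {B : LinearMap.BilinForm ℝ A} (hB : B.IsSymm)
    (x : ι → n → A) (v : o → ι → ℝ) (W : ι → EuclideanSpace ℝ n) (p : ι) :
    HasGradientAt
      (fun u => 1 / 2 * energyForm B x v (Function.update W p u) (Function.update W p u))
      (weightedDrive B (x p) x (fun q => ∑ l, v l p * v l q) W) (W p) := by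
  have energy_hasFDerivAt := hasFDerivAt_half_mul_self_of_symm
    (energyForm B x v).toContinuousBilinearMap (energyForm_isSymm hB x v).eq
    (Function.update W p (W p))
  have update_hasFDerivAt : HasFDerivAt (Function.update W p)
      (ContinuousLinearMap.single ℝ (fun _ => EuclideanSpace ℝ n) p) (W p) :=
    (hasFDerivAt_update W (W p)).congr_fderiv <| by
      ext h q
      rcases eq_or_ne q p with rfl | hq <;> simp [*]
  rw [hasGradientAt_iff_hasFDerivAt]
  refine (energy_hasFDerivAt.comp (W p) update_hasFDerivAt).congr_fderiv ?_
  ext h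
  rw [ContinuousLinearMap.comp_apply, Function.update_eq_self,
    LinearMap.toContinuousBilinearMap_apply, (energyForm_isSymm hB x v).eq]
  exact energyForm_single_left B x v p h W

theorem stmt17_general {B : LinearMap.BilinForm ℝ A} (hB : B.IsSymm) (x : ι → n → A)
    (v : o → ι → ℝ) (W : ι → EuclideanSpace ℝ n) :
    let F : ι → EuclideanSpace ℝ n → ℝ := fun p u =>
      1 / 2 * energyForm B x v (Function.update W p u) (Function.update W p u)
    (∀ p, HasGradientAt (F p) (weightedDrive B (x p) x (fun q => ∑ l, v l p * v l q) W) (W p)) ∧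
    ∀ s : ι → ℝ, (∀ p q, ∑ l, v l p * v l q = s p * s q) →
      (∀ p, HasGradientAt (F p) (s p • weightedDrive B (x p) x s W) (W p)) ∧
      ∀ p q, x p = x q → ∀ G G' : EuclideanSpace ℝ n,
        HasGradientAt (F p) G (W p) → HasGradientAt (F q) G' (W q) → s q • G = s p • G' := by
  intro F
  have hasGradientAt_weight p := hasGradientAt_energyForm_update hB x v W p
  refine ⟨hasGradientAt_weight, fun s hs => ?_⟩
  have hasGradientAt_rankOne p :
      HasGradientAt (F p) (s p • weightedDrive B (x p) x s W) (W p) := by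
    simpa only [hs, weightedDrive_const_mul] using hasGradientAt_weight p
  refine ⟨hasGradientAt_rankOne, fun p q hpq G G' hG hG' => ?_⟩
  rw [hG.unique (hasGradientAt_rankOne p), hG'.unique (hasGradientAt_rankOne q), hpq, smul_comm]

end Gradient

section ContrastiveCovariance

/-- The contrastive covariance `C_α[a, b]` as a bilinear form on samples with two views: `a.1` is
the first view, `a.2` the second. -/
def contrastiveCov {R N : Type*} [CommRing R] [Fintype N] [DecidableEq N] (α : N → N → R) :
    LinearMap.BilinForm R ((N → R) × (N → R)) :=
  LinearMap.mk₂ R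
    (fun a b =>
      (∑ i, ∑ j ∈ univ \ {i}, α i j * ((a.1 i - a.1 j) * (b.1 i - b.1 j))) -
        ∑ i, (∑ j ∈ univ \ {i}, α i j) * ((a.1 i - a.2 i) * (b.1 i - b.2 i)))
    (fun a a' b => by
      simp only [Prod.fst_add, Prod.snd_add, Pi.add_apply, add_sub_add_comm, add_mul, mul_add,
        Finset.sum_add_distrib])
    (fun r a b => by
      simp only [Prod.smul_fst, Prod.smul_snd, Pi.smul_apply, smul_eq_mul, ← mul_sub, mul_assoc,
        mul_left_comm _ r, ← Finset.mul_sum])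
    (fun a b b' => by
      simp only [Prod.fst_add, Prod.snd_add, Pi.add_apply, add_sub_add_comm, mul_add,
        Finset.sum_add_distrib])
    (fun r a b => by
      simp only [Prod.smul_fst, Prod.smul_snd, Pi.smul_apply, smul_eq_mul, ← mul_sub,
        mul_left_comm _ r, ← Finset.mul_sum])

theorem contrastiveCov_isSymm {R N : Type*} [CommRing R] [Fintype N] [DecidableEq N]
    (α : N → N → R) : (contrastiveCov α).IsSymm :=
  ⟨fun a b => by simp only [contrastiveCov, LinearMap.mk₂_apply, mul_comm (a.1 _ - _)]⟩

/-- The coordinate samples of a vector-valued sample with views `y` and `y'`, paired by view as in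
`contrastiveCov`. -/
def coordSamples {N n : Type*} (y y' : N → EuclideanSpace ℝ n) (r : n) : (N → ℝ) × (N → ℝ) :=
  (fun i => y i r, fun i => y' i r)

theorem linearCombination_coordSamples {N n : Type*} [Fintype n] (y y' : N → EuclideanSpace ℝ n)
    (w : EuclideanSpace ℝ n) :
    Fintype.linearCombination ℝ (coordSamples y y') w =
      (fun i => ⟪w, y i⟫, fun i => ⟪w, y' i⟫) := by
  ext i <;>
    simp [Fintype.linearCombination_apply, coordSamples, PiLp.inner_apply, Prod.fst_sum,
      Prod.snd_sum, mul_comm]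

theorem networkOutput_coordSamples_update {N n κ μ : Type*} [Fintype n] [Fintype κ] [Fintype μ]
    [DecidableEq κ] [DecidableEq μ] (x x' : κ → N → EuclideanSpace ℝ n) (c : κ → μ → ℝ)
    (W : κ → μ → EuclideanSpace ℝ n) (k : κ) (m : μ) (u : EuclideanSpace ℝ n) :
    networkOutput (fun p : κ × μ => coordSamples (x p.1) (x' p.1)) (fun p => c p.1 p.2)
        (Function.update (fun p => W p.1 p.2) (k, m) u) =
      (fun i => ∑ k', ∑ m', c k' m' * ⟪if k' = k ∧ m' = m then u else W k' m', x k' i⟫,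
        fun i => ∑ k', ∑ m', c k' m' * ⟪if k' = k ∧ m' = m then u else W k' m', x' k' i⟫) := by
  rw [networkOutput_apply]
  simp only [linearCombination_coordSamples, Fintype.sum_prod_type, Function.update_apply,
    Prod.mk.injEq]
  ext i <;> simp [Prod.fst_sum, Prod.snd_sum]

end ContrastiveCovariance

/-- gradient colinearity in linear two-layer networks. For the linear
two-layer contrastive energy `E(W) = ½ Σ_l C_α[f_l, f_l]` with non-overlapping receptive
fields, the gradient with respect to `w_{km}` equals
`Σ_{k',m'} s_{km,k'm'} C_α[x_k, x_{k'}] w_{k'm'}`; in the rank-one case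
`s_{km,k'm'} = s_{km} s_{k'm'}`, it equals `s_{km} b_k(W, V)` with `b_k` independent of
`m`, so the gradients of all weights in the same receptive field are pairwise colinear. -/
theorem stmt17 {N K M d dout : ℕ} (hN : 2 ≤ N)
    (x x' : Fin K → Fin N → EuclideanSpace ℝ (Fin d))
    (α : Fin N → Fin N → ℝ)
    (v : Fin dout → Fin K → Fin M → ℝ)
    (W : Fin K → Fin M → EuclideanSpace ℝ (Fin d)) :
    -- contrastive covariance of two scalar sample families (with second views)
    let Cα : (Fin N → ℝ) → (Fin N → ℝ) → (Fin N → ℝ) → (Fin N → ℝ) → ℝ :=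
      fun a a' bg bg' =>
        (∑ i, ∑ j ∈ Finset.univ \ {i}, α i j * ((a i - a j) * (bg i - bg j))) -
          ∑ i, (∑ j ∈ Finset.univ \ {i}, α i j) * ((a i - a' i) * (bg i - bg' i))
    -- the d×d matrix C_α[x_k, x_{k'}]
    let Cmat : Fin K → Fin K → Matrix (Fin d) (Fin d) ℝ := fun k k' r cc =>
      Cα (fun i => x k i r) (fun i => x' k i r) (fun i => x k' i cc) (fun i => x' k' i cc)
    let s : Fin K → Fin M → Fin K → Fin M → ℝ := fun k m k' m' => ∑ l, v l k m * v l k' m'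
    -- linear-network outputs on the two views
    let f : (Fin K → Fin M → EuclideanSpace ℝ (Fin d)) → Fin dout → Fin N → ℝ :=
      fun Wt l i => ∑ k, ∑ m, v l k m * ⟪Wt k m, x k i⟫
    let f' : (Fin K → Fin M → EuclideanSpace ℝ (Fin d)) → Fin dout → Fin N → ℝ :=
      fun Wt l i => ∑ k, ∑ m, v l k m * ⟪Wt k m, x' k i⟫
    let E : (Fin K → Fin M → EuclideanSpace ℝ (Fin d)) → ℝ :=
      fun Wt => (1 / 2) * ∑ l, Cα (f Wt l) (f' Wt l) (f Wt l) (f' Wt l)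
    -- the energy as a function of the single weight `w_{km}`, all others held fixed
    let F : Fin K → Fin M → EuclideanSpace ℝ (Fin d) → ℝ := fun k m u =>
      E (fun k' m' => if k' = k ∧ m' = m then u else W k' m')
    -- (1) closed form of the gradient
    (∀ k m, HasGradientAt (F k m)
        ((EuclideanSpace.equiv (Fin d) ℝ).symm
          (∑ k', ∑ m', s k m k' m' •
            (Cmat k k').mulVec (EuclideanSpace.equiv (Fin d) ℝ (W k' m')))) (W k m)) ∧
    -- (2) rank-one case: gradient is `s_{km} • b_k(W,V)` and gradients are colinear
    (∀ sv : Fin K → Fin M → ℝ,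
      (∀ k m k' m', s k m k' m' = sv k m * sv k' m') →
      (∀ k m, HasGradientAt (F k m)
          (sv k m • (EuclideanSpace.equiv (Fin d) ℝ).symm
            (∑ k', ∑ m', sv k' m' •
              (Cmat k k').mulVec (EuclideanSpace.equiv (Fin d) ℝ (W k' m')))) (W k m)) ∧
      (∀ k m m' (G G' : EuclideanSpace ℝ (Fin d)),
        HasGradientAt (F k m) G (W k m) → HasGradientAt (F k m') G' (W k m') →
        sv k m' • G = sv k m • G')) := by
  have general := stmt17_general (contrastiveCov_isSymm α)
    (fun p : Fin K × Fin M => coordSamples (x p.1) (x' p.1)) (fun l p => v l p.1 p.2)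
    (fun p => W p.1 p.2)
  simp only [Prod.forall, weightedDrive, Fintype.sum_prod_type, energyForm_apply,
    networkOutput_coordSamples_update] at general
  exact general.imp_right fun rankOne sv hs =>
    (rankOne (fun p => sv p.1 p.2) hs).imp_right fun colinear k m m' => colinear k m k m' rfl
end

section
/- Let d ≥ 1 and ε ∈ [0, 1], and let Y_1, …, Y_d be independent random variables each uniformly distributed on the interval [−1, 1]. Then P[ Y_1 > 0 and Y_1 + ε ≥ max_{2 ≤ l ≤ d} Y_l ] = (1/d) · ( 1 − ((1 + ε)/2)^d ) + ε/2 (where for d = 1 the maximum over the empty set is interpreted so that the event reduces to {Y_1 > 0} and the formula gives 1/2 only when ε = 1; for d ≥ 2 the formula holds as stated). Moreover, for ε > 1 the probability equals 1/2, and for −1 < ε < 0 it equals (1/d) · ( (1 + ε/2)^d − ((1 + ε)/2)^d ). -/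
open MeasureTheory

/-!
Let `F` be the distribution function of the uniform law on `[-1, 1]`. Conditionally on `Y₁ = y`, the
other coordinates stay below `y + ε` independently, so the event has probability
`½ ∫₀¹ F(y + ε)^(d-1) dy`. For `ε ≥ -1` the substitution `u = (y + ε + 1) / 2` turns this into the
integral of `min 1 u ^ (d - 1)` over an interval of length `1 / 2` starting at `(1 + ε) / 2`. The
three regimes of `ε` are the three positions of that interval relative to the kink at `u = 1`.
-/

lemma measure_pi_setOf_mem_and_forall_succAbove {n : ℕ} {α : Fin (n + 1) → Type*}
    [∀ j, MeasurableSpace (α j)] (μ : ∀ j, Measure (α j)) [∀ j, SigmaFinite (μ j)]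
    (i : Fin (n + 1)) {s : Set (α i)} (hs : MeasurableSet s)
    {r : ∀ j : Fin n, Set (α i × α (i.succAbove j))} (hr : ∀ j, MeasurableSet (r j)) :
    Measure.pi μ {Y | Y i ∈ s ∧ ∀ j, (Y i, Y (i.succAbove j)) ∈ r j}
      = ∫⁻ y in s, ∏ j, μ (i.succAbove j) (Prod.mk y ⁻¹' r j) ∂μ i := by
  let S : Set (α i × ∀ j, α (i.succAbove j)) := {p | p.1 ∈ s ∧ ∀ j, (p.1, p.2 j) ∈ r j}
  have hS : MeasurableSet S := by
    have hr_coord (j : Fin n) :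
        MeasurableSet {p : α i × ∀ j, α (i.succAbove j) | (p.1, p.2 j) ∈ r j} :=
      (measurable_fst.prodMk ((measurable_pi_apply j).comp measurable_snd)) (hr j)
    exact (measurable_fst hs).inter
      (measurableSet_setOfPred.2 (.forall fun j => measurableSet_setOfPred.1 (hr_coord j)))
  have measure_section (y : α i) :
      Measure.pi (fun j => μ (i.succAbove j)) (Prod.mk y ⁻¹' S)
        = s.indicator (fun y => ∏ j, μ (i.succAbove j) (Prod.mk y ⁻¹' r j)) y := by
    by_cases hy : y ∈ s
    · have : Prod.mk y ⁻¹' S = Set.univ.pi fun j => Prod.mk y ⁻¹' r j := by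
        ext z; simp [S, hy]
      rw [this, Measure.pi_pi, Set.indicator_of_mem hy]
    · have : Prod.mk y ⁻¹' S = ∅ := by
        ext z; simp [S, hy]
      rw [this, measure_empty, Set.indicator_of_notMem hy]
  calc Measure.pi μ (MeasurableEquiv.piFinSuccAbove α i ⁻¹' S)
      = ((μ i).prod (Measure.pi fun j => μ (i.succAbove j))) S :=
        (measurePreserving_piFinSuccAbove μ i).measure_preimage hS.nullMeasurableSet
    _ = ∫⁻ y, s.indicator (fun y => ∏ j, μ (i.succAbove j) (Prod.mk y ⁻¹' r j)) y ∂μ i := by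
        rw [Measure.prod_apply hS]
        exact lintegral_congr measure_section
    _ = ∫⁻ y in s, ∏ j, μ (i.succAbove j) (Prod.mk y ⁻¹' r j) ∂μ i := lintegral_indicator hs _

lemma measure_pi_setOf_mem_and_forall_ne_le_add (ν : Measure ℝ) [SigmaFinite ν] {n : ℕ}
    (i : Fin (n + 1)) {s : Set ℝ} (hs : MeasurableSet s) (ε : ℝ) :
    Measure.pi (fun _ => ν) {Y : Fin (n + 1) → ℝ | Y i ∈ s ∧ ∀ l, l ≠ i → Y l ≤ Y i + ε}
      = ∫⁻ y in s, ν (Set.Iic (y + ε)) ^ n ∂ν := by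
  have hr : MeasurableSet {p : ℝ × ℝ | p.2 ≤ p.1 + ε} :=
    measurableSet_le (by fun_prop) (by fun_prop)
  have fubini := measure_pi_setOf_mem_and_forall_succAbove (fun _ => ν) i hs (fun _ : Fin n => hr)
  simpa [Fin.forall_iff_succAbove i, Set.preimage, Set.Iic] using fubini

lemma two_inv_mul_ofReal (x : ℝ) : (2 : ENNReal)⁻¹ * ENNReal.ofReal x = ENNReal.ofReal (x / 2) := by
  rw [ENNReal.ofReal_div_of_pos two_pos, ENNReal.ofReal_ofNat, ENNReal.div_eq_inv_mul]

/-- The uniform probability measure on `[-1, 1]`, the law of each initial projection `Y_l`. It is a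
scaled restriction of Lebesgue measure, so that it unfolds to the factors of `Measure.pi` in
`stmt18`. -/
noncomputable def symmUniform : Measure ℝ :=
  (2 : ENNReal)⁻¹ • volume.restrict (Set.Icc (-1 : ℝ) 1)

instance : IsProbabilityMeasure symmUniform where
  measure_univ := by
    rw [symmUniform, Measure.smul_apply, Measure.restrict_apply_univ, Real.volume_Icc, smul_eq_mul,
      two_inv_mul_ofReal]
    norm_num

lemma symmUniform_Iic (x : ℝ) :
    symmUniform (Set.Iic x) = ENNReal.ofReal (min 1 ((x + 1) / 2)) := by
  have inter_eq : Set.Iic x ∩ Set.Icc (-1 : ℝ) 1 = Set.Icc (-1) (min 1 x) := by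
    ext y
    simp only [Set.mem_inter_iff, Set.mem_Iic, Set.mem_Icc, le_min_iff]
    tauto
  rw [symmUniform, Measure.smul_apply, Measure.restrict_apply measurableSet_Iic, inter_eq,
    Real.volume_Icc, smul_eq_mul, two_inv_mul_ofReal]
  congr 1
  rw [sub_neg_eq_add, ← min_add_add_right, ← min_div_div_right zero_le_two]
  norm_num

lemma setLIntegral_Ioi_zero_symmUniform (f : ℝ → ENNReal) :
    ∫⁻ y in Set.Ioi 0, f y ∂symmUniform = 2⁻¹ * ∫⁻ y in Set.Ioc 0 1, f y := by
  have inter_eq : Set.Ioi (0 : ℝ) ∩ Set.Icc (-1) 1 = Set.Ioc 0 1 := by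
    ext y
    simp only [Set.mem_inter_iff, Set.mem_Ioi, Set.mem_Icc, Set.mem_Ioc]
    grind
  rw [symmUniform, Measure.restrict_smul, Measure.restrict_restrict measurableSet_Ioi, inter_eq,
    lintegral_smul_measure, smul_eq_mul]

lemma setLIntegral_Ioi_zero_symmUniform_Iic_add_pow (n : ℕ) {ε : ℝ} (hε : -1 ≤ ε) :
    ∫⁻ y in Set.Ioi 0, symmUniform (Set.Iic (y + ε)) ^ n ∂symmUniform
      = ENNReal.ofReal (∫ u in (1 + ε) / 2..1 + ε / 2, min 1 u ^ n) := by
  let g : ℝ → ℝ := fun y => min 1 (y / 2 + (1 + ε) / 2)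
  have g_nonneg {y : ℝ} (hy : y ∈ Set.Ioc 0 1) : 0 ≤ g y :=
    le_min zero_le_one (by linarith [hy.1])
  have g_pow_integrable : IntegrableOn (fun y => g y ^ n) (Set.Ioc 0 1) :=
    (Continuous.intervalIntegrable (by fun_prop) 0 1).1
  have substitution :
      (∫ y in (0 : ℝ)..1, g y ^ n) / 2 = ∫ u in (1 + ε) / 2..1 + ε / 2, min 1 u ^ n := by
    have := intervalIntegral.inv_smul_integral_comp_div_add (a := 0) (b := 1)
      (fun u : ℝ => min 1 u ^ n) 2 ((1 + ε) / 2)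
    rw [smul_eq_mul, inv_mul_eq_div] at this
    convert this using 2 <;> ring
  calc ∫⁻ y in Set.Ioi 0, symmUniform (Set.Iic (y + ε)) ^ n ∂symmUniform
      = 2⁻¹ * ∫⁻ y in Set.Ioc 0 1, symmUniform (Set.Iic (y + ε)) ^ n :=
        setLIntegral_Ioi_zero_symmUniform _
    _ = 2⁻¹ * ∫⁻ y in Set.Ioc 0 1, ENNReal.ofReal (g y ^ n) := by
        congr 1
        refine setLIntegral_congr_fun measurableSet_Ioc fun y hy => ?_
        have cdf_arg : (y + ε + 1) / 2 = y / 2 + (1 + ε) / 2 := by ring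
        simp only [symmUniform_Iic, cdf_arg, ENNReal.ofReal_pow (g_nonneg hy), g]
    _ = 2⁻¹ * ENNReal.ofReal (∫ y in (0 : ℝ)..1, g y ^ n) := by
        rw [intervalIntegral.integral_of_le zero_le_one,
          ofReal_integral_eq_lintegral_ofReal g_pow_integrable]
        exact ae_restrict_of_forall_mem measurableSet_Ioc fun y hy => pow_nonneg (g_nonneg hy) n
    _ = ENNReal.ofReal (∫ u in (1 + ε) / 2..1 + ε / 2, min 1 u ^ n) := by
        rw [two_inv_mul_ofReal, substitution]

lemma integral_one_min_one_pow (n : ℕ) (x : ℝ) :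
    ∫ u in (1 : ℝ)..x, min 1 u ^ n = (min 1 x ^ (n + 1) - 1) / (n + 1) + (max 1 x - 1) := by
  rcases le_total x 1 with hx | hx
  · have eq_pow : ∫ u in (1 : ℝ)..x, min 1 u ^ n = ∫ u in (1 : ℝ)..x, u ^ n :=
      intervalIntegral.integral_congr fun u hu => by
        rw [Set.uIcc_of_ge hx] at hu
        simp only [min_eq_right hu.2]
    rw [eq_pow, integral_pow, min_eq_right hx, max_eq_left hx, one_pow, sub_self, add_zero]
  · have eq_one : ∫ u in (1 : ℝ)..x, min 1 u ^ n = ∫ _ in (1 : ℝ)..x, (1 : ℝ) :=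
      intervalIntegral.integral_congr fun u hu => by
        rw [Set.uIcc_of_le hx] at hu
        simp only [min_eq_left hu.1, one_pow]
    rw [eq_one, integral_one, min_eq_left hx, max_eq_right hx, one_pow, sub_self, zero_div,
      zero_add]

lemma integral_min_one_pow (n : ℕ) (a b : ℝ) :
    ∫ u in a..b, min 1 u ^ n
      = (min 1 b ^ (n + 1) - min 1 a ^ (n + 1)) / (n + 1) + (max 1 b - max 1 a) := by
  have integrable (x y : ℝ) : IntervalIntegrable (fun u : ℝ => min 1 u ^ n) volume x y :=
    Continuous.intervalIntegrable (by fun_prop) x y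
  rw [← intervalIntegral.integral_interval_sub_left (integrable 1 b) (integrable 1 a),
    integral_one_min_one_pow, integral_one_min_one_pow]
  ring

lemma measure_pi_symmUniform_pos_and_forall_ne_le_add {n : ℕ} (i : Fin (n + 1)) {ε : ℝ}
    (hε : -1 ≤ ε) :
    Measure.pi (fun _ => symmUniform)
        {Y : Fin (n + 1) → ℝ | 0 < Y i ∧ ∀ l, l ≠ i → Y l ≤ Y i + ε}
      = ENNReal.ofReal ((min 1 (1 + ε / 2) ^ (n + 1) - min 1 ((1 + ε) / 2) ^ (n + 1)) / (n + 1)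
          + (max 1 (1 + ε / 2) - max 1 ((1 + ε) / 2))) := by
  rw [← integral_min_one_pow, ← setLIntegral_Ioi_zero_symmUniform_Iic_add_pow n hε]
  exact measure_pi_setOf_mem_and_forall_ne_le_add symmUniform i measurableSet_Ioi ε

/-- probability of winning the specialization race. Let `Y_1, …, Y_d`
be i.i.d. uniform on `[−1, 1]` (realized as the product of uniform probability measures
on `[−1,1]`). For the event `{Y_1 > 0 and Y_1 + ε ≥ Y_l for all l ≠ 1}`:
for `d ≥ 2` and `ε ∈ [0,1]` its probability is `(1/d)(1 − ((1+ε)/2)^d) + ε/2`;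
for `ε > 1` it is `1/2`; and for `−1 < ε < 0` it is
`(1/d)((1 + ε/2)^d − ((1+ε)/2)^d)`. -/
theorem stmt18 (d : ℕ) (hd : 1 ≤ d) (ε : ℝ) :
    let μ : Measure (Fin d → ℝ) :=
      Measure.pi fun _ => (2 : ENNReal)⁻¹ • volume.restrict (Set.Icc (-1 : ℝ) 1)
    let i0 : Fin d := ⟨0, hd⟩
    let event : Set (Fin d → ℝ) := {Y | 0 < Y i0 ∧ ∀ l, l ≠ i0 → Y l ≤ Y i0 + ε}
    (2 ≤ d → 0 ≤ ε → ε ≤ 1 →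
      μ event = ENNReal.ofReal ((1 / d) * (1 - ((1 + ε) / 2) ^ d) + ε / 2)) ∧
    (1 < ε → μ event = ENNReal.ofReal (1 / 2)) ∧
    (-1 < ε → ε < 0 →
      μ event = ENNReal.ofReal ((1 / d) * ((1 + ε / 2) ^ d - ((1 + ε) / 2) ^ d))) := by
  obtain ⟨n, rfl⟩ := Nat.exists_eq_add_of_le' hd
  intro μ i0 event
  have win_prob (hε : -1 ≤ ε) : μ event = _ :=
    measure_pi_symmUniform_pos_and_forall_ne_le_add i0 hε
  push_cast
  refine ⟨fun _ h0 h1 => ?_, fun h1 => ?_, fun h0 h1 => ?_⟩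
  · rw [win_prob (by linarith), min_eq_left (by linarith), min_eq_right (by linarith),
      max_eq_right (by linarith), max_eq_left (by linarith)]
    congr 1
    ring
  · rw [win_prob (by linarith), min_eq_left (by linarith), min_eq_left (by linarith),
      max_eq_right (by linarith), max_eq_right (by linarith)]
    congr 1
    ring
  · rw [win_prob (by linarith), min_eq_right (by linarith), min_eq_right (by linarith),
      max_eq_left (by linarith), max_eq_left (by linarith)]
    congr 1
    ring
end
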